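/- arXiv:1903.00909 — 5 statements merged into one kernel-verified Lean document; each statement's English description precedes it below -/
import Mathlib

section
/- Let P be a finite poset on {1,...,n}, and suppose a point x = (x_1,...,x_n) ∈ ℝ^n satisfies 2^{r−1} x_{i_1} − Σ_{j=2}^r 2^{r−j} x_{i_j} ≤ 1 for every saturated chain i_1 ⋖ ⋯ ⋖ i_r with i_r maximal, and −Σ_{j=1}^r 2^{r−j} x_{i_j} ≤ 1 for every maximal chain i_1 ⋖ ⋯ ⋖ i_r. Then |x_i| ≤ 1 for every i. -/
/-- A saturated chain `i_1 ⋖ ⋯ ⋖ i_r` whose top `i_r` is a maximal element. -/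
def IsSatChainToMax {P : Type*} [PartialOrder P] (l : List P) : Prop :=
  l ≠ [] ∧ l.Chain' (· ⋖ ·) ∧ (∃ a, l.getLast? = some a ∧ IsMax a)

/-- A maximal chain: a saturated chain from a minimal to a maximal element. -/
def IsMaxChainList {P : Type*} [PartialOrder P] (l : List P) : Prop :=
  l ≠ [] ∧ l.Chain' (· ⋖ ·) ∧
    (∃ a, l.head? = some a ∧ IsMin a) ∧ (∃ a, l.getLast? = some a ∧ IsMax a)

def chS {P : Type*} (x : P → ℝ) : List P → ℝ
  | [] => 0
  | a :: l => 2 ^ l.length * x a + chS x l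

theorem chS_eq {P : Type*} (x : P → ℝ) (l : List P) :
    ∑ j : Fin l.length, (2 : ℝ) ^ (l.length - 1 - (j : ℕ)) * x (l.get j) = chS x l := by
  induction l with
  | nil => simp [chS]
  | cons a l ih =>
    rw [chS, ← ih]
    simp only [List.length_cons]
    rw [Fin.sum_univ_succ]
    congr 1
    apply Finset.sum_congr rfl
    intro j _
    have h : l.length + 1 - 1 - ((Fin.succ j : Fin (l.length + 1)) : ℕ) = l.length - 1 - (j : ℕ) := by
      simp only [Fin.val_succ]; omega
    rw [h]
    rfl

theorem chA_eq {P : Type*} (x : P → ℝ) (a : P) (l : List P) :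
    ∑ j : Fin (a :: l).length,
        (if (j : ℕ) = 0 then (2 : ℝ) ^ ((a :: l).length - 1)
          else -(2 : ℝ) ^ ((a :: l).length - 1 - (j : ℕ))) * x ((a :: l).get j)
      = 2 ^ l.length * x a - chS x l := by
  rw [← chS_eq]
  simp only [List.length_cons]
  rw [Fin.sum_univ_succ, sub_eq_add_neg, ← Finset.sum_neg_distrib]
  congr 1
  apply Finset.sum_congr rfl
  intro j _
  have h : l.length + 1 - 1 - ((Fin.succ j : Fin (l.length + 1)) : ℕ) = l.length - 1 - (j : ℕ) := by
    simp only [Fin.val_succ]; omega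
  rw [h, if_neg (by simp), neg_mul]
  rfl

theorem satTail {P : Type*} [PartialOrder P] {a b : P} {l : List P}
    (h : IsSatChainToMax (a :: b :: l)) : IsSatChainToMax (b :: l) := by
  obtain ⟨_, h2, h3⟩ := h
  refine ⟨by simp, ?_, by simpa using h3⟩
  exact (List.isChain_cons_cons.1 h2).2

theorem satCons {P : Type*} [PartialOrder P] {a b : P} {l : List P} (hab : a ⋖ b)
    (h : IsSatChainToMax (b :: l)) : IsSatChainToMax (a :: b :: l) := by
  obtain ⟨_, h2, h3⟩ := h
  refine ⟨by simp, ?_, by simpa using h3⟩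
  exact List.isChain_cons_cons.2 ⟨hab, h2⟩

theorem satExists {P : Type*} [Finite P] [PartialOrder P] (a : P) :
    ∃ l, IsSatChainToMax (a :: l) := by
  induction a using (wellFounded_gt (α := P)).induction with
  | _ a ih =>
    by_cases h : IsMax a
    · exact ⟨[], by simp, List.isChain_singleton a, a, by simp, h⟩
    · obtain ⟨c, hc⟩ := not_isMax_iff.1 h
      obtain ⟨b, hb, _⟩ := exists_covBy_le_of_lt hc
      obtain ⟨l, hl⟩ := ih b hb.lt
      exact ⟨b :: l, satCons hb hl⟩

/-- If `x ∈ ℝ^P` satisfies inequalities (a) over saturated chains ending at a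
maximal element and (b) over maximal chains, then `|x_i| ≤ 1` for all `i`. -/
theorem stmt11 (P : Type*) [Fintype P] [PartialOrder P] (x : P → ℝ)
    (ha : ∀ l : List P, IsSatChainToMax l →
      ∑ j : Fin l.length,
        (if (j : ℕ) = 0 then (2 : ℝ) ^ (l.length - 1)
          else -(2 : ℝ) ^ (l.length - 1 - (j : ℕ))) * x (l.get j) ≤ 1)
    (hb : ∀ l : List P, IsMaxChainList l →
      -∑ j : Fin l.length, (2 : ℝ) ^ (l.length - 1 - (j : ℕ)) * x (l.get j) ≤ 1) :
    ∀ i : P, |x i| ≤ 1 := by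
  have hA : ∀ a l, IsSatChainToMax (a :: l) → 2 ^ l.length * x a - chS x l ≤ 1 := by
    intro a l h
    rw [← chA_eq]
    exact ha _ h
  have hB : ∀ l, IsMaxChainList l → -1 ≤ chS x l := by
    intro l h
    have := hb l h
    rw [chS_eq] at this
    linarith
  have h1 : ∀ (l : List P) (a : P), IsSatChainToMax (a :: l) → chS x l ≤ 2 ^ l.length - 1 := by
    intro l
    induction l with
    | nil => intro a _; simp [chS]
    | cons b m ih =>
      intro a h
      have h' := satTail h
      have e1 := ih b h'
      have e2 := hA b m h'
      simp only [chS, List.length_cons, pow_succ]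
      linarith
  have h3 : ∀ (a : P) (l : List P), IsSatChainToMax (a :: l) → -1 ≤ chS x (a :: l) := by
    intro a
    induction a using (wellFounded_lt (α := P)).induction with
    | _ a ih =>
      intro l h
      by_cases hm : IsMin a
      · exact hB _ ⟨h.1, h.2.1, ⟨a, by simp, hm⟩, h.2.2⟩
      · obtain ⟨c, hc⟩ := not_isMin_iff.1 hm
        obtain ⟨b, _, hb'⟩ := exists_le_covBy_of_lt hc
        have h' := satCons hb' h
        have e1 := ih b hb'.lt _ h'
        have e2 := hA _ _ h'
        rw [chS] at e1
        linarith
  intro i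
  obtain ⟨l, hl⟩ := satExists i
  have e1 := h1 l i hl
  have e2 := hA i l hl
  have e3 := h3 i l hl
  rw [chS] at e3
  have hp : (0 : ℝ) < 2 ^ l.length := by positivity
  rw [abs_le]
  constructor
  · by_contra! hc
    nlinarith [mul_lt_mul_of_pos_left hc hp]
  · by_contra! hc
    nlinarith [mul_lt_mul_of_pos_left hc hp]
end

section
/- Let P be a finite poset on {1,...,n}, n ≥ 1. The number of facets of the enriched order polytope O^(e)_P equals sc(P) + mc(P), where sc(P) is the number of saturated chains of P ending at a maximal element of P, and mc(P) is the number of maximal chains of P. -/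
/-- The set of minimal elements of a subset of a poset. -/
def minSet {P : Type*} [PartialOrder P] (S : Set P) : Set P :=
  {a | a ∈ S ∧ ∀ b ∈ S, b ≤ a → b = a}

/-- The vertex set of the enriched order polytope. -/
def enrichedOrderVerts (P : Type*) [PartialOrder P] : Set (P → ℝ) :=
  {x | ∃ F : Set P, IsUpperSet F ∧
    (∀ i ∈ minSet F, x i = 1 ∨ x i = -1) ∧
    (∀ i ∈ F, i ∉ minSet F → x i = 1) ∧
    (∀ i, i ∉ F → x i = 0)}

/-- `F` is a facet of `S ⊆ ℝ^P`: a nonempty proper exposed face of affine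
dimension `(card P) - 1`. -/
def IsFacetOf (P : Type*) [Fintype P] (S F : Set (P → ℝ)) : Prop :=
  F.Nonempty ∧ IsExposed ℝ S F ∧ F ≠ S ∧
    Module.finrank ℝ ↥(vectorSpan ℝ F) = Fintype.card P - 1

namespace EOP

theorem eps_exists {E ι : Type*} [AddCommGroup E] [Module ℝ E] [Finite ι]
    (g : ι → E →ₗ[ℝ] ℝ) (c : ι → ℝ) (p d : E)
    (h : ∀ i, g i p < c i ∨ (g i p = c i ∧ g i d = 0)) :
    ∃ ε : ℝ, 0 < ε ∧ ∀ i, g i (p + ε • d) ≤ c i := by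
  have h1 : ∀ᶠ ε : ℝ in nhdsWithin 0 (Set.Ioi 0), ∀ i, g i (p + ε • d) ≤ c i := by
    rw [Filter.eventually_all]
    intro i
    rcases h i with h | ⟨h, h'⟩
    · have hc : Continuous (fun ε : ℝ => g i p + ε * g i d) := by fun_prop
      have h2 : ∀ᶠ ε : ℝ in nhds 0, g i p + ε * g i d < c i :=
        hc.continuousAt.eventually_lt continuousAt_const (by simpa using h)
      filter_upwards [h2.filter_mono nhdsWithin_le_nhds] with ε hε
      simpa using hε.le
    · filter_upwards with ε
      simp [h, h']
  obtain ⟨ε, h2, h3⟩ := (h1.and self_mem_nhdsWithin).exists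
  exact ⟨ε, h3, h2⟩

theorem facet_count (P : Type*) [Fintype P] {ι : Type*} [Finite ι] (S : Set (P → ℝ))
    (g : ι → (P → ℝ) →ₗ[ℝ] ℝ) (c : ι → ℝ) (hc : ∀ i, 0 < c i)
    (hS : ∀ x, x ∈ S ↔ ∀ i, g i x ≤ c i)
    (hp : ∀ i, ∃ p, g i p = c i ∧ ∀ j, j ≠ i → g j p < c j) :
    Set.ncard {F : Set (P → ℝ) | IsFacetOf P S F} = Nat.card ι := by
  set Φ : ι → Set (P → ℝ) := fun i => {x | x ∈ S ∧ g i x = c i} with hΦ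
  have hpS : ∀ i p, g i p = c i → (∀ j, j ≠ i → g j p < c j) → p ∈ S := by
    intro i p h1 h2
    rw [hS]
    intro j
    by_cases hj : j = i
    · subst hj; exact h1.le
    · exact (h2 j hj).le
  have hg0 : ∀ i, g i ≠ 0 := by
    intro i h
    obtain ⟨p, h1, _⟩ := hp i
    have := hc i
    rw [← h1, h] at this
    simp at this
  have hker : ∀ i, Module.finrank ℝ (LinearMap.ker (g i)) = Fintype.card P - 1 := by
    intro i
    have := Module.Dual.finrank_ker_add_one_of_ne_zero (f := g i) (hg0 i)
    rw [Module.finrank_fintype_fun_eq_card] at this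
    omega
  have hvs : ∀ (f : (P → ℝ) →ₗ[ℝ] ℝ) (F : Set (P → ℝ)), (∀ x ∈ F, ∀ y ∈ F, f x = f y) →
      vectorSpan ℝ F ≤ LinearMap.ker f := by
    intro f F h
    rw [vectorSpan, Submodule.span_le]
    rintro _ ⟨x, hx, y, hy, rfl⟩
    simp [h x hx y hy]
  have hcont : ∀ f : (P → ℝ) →ₗ[ℝ] ℝ, Continuous f := fun f => f.continuous_of_finiteDimensional
  have hSconv : Convex ℝ S := by
    have : S = ⋂ i, {x | g i x ≤ c i} := by ext x; simp [hS]
    rw [this]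
    exact convex_iInter fun i => convex_halfSpace_le (g i).isLinear _
  have hfacet : ∀ i, IsFacetOf P S (Φ i) := by
    intro i
    obtain ⟨p, h1, h2⟩ := hp i
    have hpm : p ∈ Φ i := ⟨hpS i p h1 h2, h1⟩
    refine ⟨⟨p, hpm⟩, ?_, ?_, ?_⟩
    · intro _
      refine ⟨⟨g i, hcont _⟩, ?_⟩
      ext x
      constructor
      · rintro ⟨hx, hx'⟩
        refine ⟨hx, fun y hy => ?_⟩
        change g i y ≤ g i x
        rw [hx']
        exact (hS y).1 hy i
      · rintro ⟨hx, hx'⟩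
        refine ⟨hx, le_antisymm ((hS x).1 hx i) ?_⟩
        rw [← h1]
        exact hx' p hpm.1
    · intro h
      have h0 : (0 : P → ℝ) ∈ S := by rw [hS]; intro j; simpa using (hc j).le
      rw [← h] at h0
      have := h0.2
      simp at this
      exact (hc i).ne this
    · suffices h : vectorSpan ℝ (Φ i) = LinearMap.ker (g i) by rw [h, hker i]
      apply le_antisymm
      · apply hvs
        rintro x hx y hy
        rw [hx.2, hy.2]
      · intro d hd
        rw [LinearMap.mem_ker] at hd
        obtain ⟨ε, he, h3⟩ := eps_exists g c p d (by
          intro j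
          by_cases hj : j = i
          · subst hj; exact Or.inr ⟨h1, hd⟩
          · exact Or.inl (h2 j hj))
        have hm : p + ε • d ∈ Φ i := ⟨(hS _).2 h3, by simp [h1, hd]⟩
        have := vsub_mem_vectorSpan ℝ hm hpm
        simp only [vsub_eq_sub, add_sub_cancel_left] at this
        exact (Submodule.smul_mem_iff _ he.ne').1 this
  have hinj : Function.Injective Φ := by
    intro i j hij
    obtain ⟨p, h1, h2⟩ := hp i
    have hpm : p ∈ Φ i := ⟨hpS i p h1 h2, h1⟩
    rw [hij] at hpm
    by_contra hne
    exact (h2 j (Ne.symm hne)).ne hpm.2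
  have hsurj : ∀ F, IsFacetOf P S F → ∃ i, Φ i = F := by
    rintro F ⟨⟨x0, hx0⟩, hexp, hne, hdim⟩
    have hconv : Convex ℝ F := hexp.convex hSconv
    obtain ⟨f, hf⟩ := hexp ⟨x0, hx0⟩
    have hfS : F ⊆ S := by rw [hf]; exact fun x hx => hx.1
    have hmax : ∀ x ∈ F, ∀ y ∈ S, f y ≤ f x := by
      intro x hx; rw [hf] at hx; exact hx.2
    have key : ∃ i, F ⊆ Φ i := by
      by_contra hcon
      push Not at hcon
      have hq : ∀ i, ∃ q ∈ F, g i q < c i := by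
        intro i
        obtain ⟨q, hq, hq'⟩ := Set.not_subset.1 (hcon i)
        refine ⟨q, hq, lt_of_le_of_ne ((hS q).1 (hfS hq) i) fun h => hq' ⟨hfS hq, h⟩⟩
      have := Fintype.ofFinite ι
      classical
      have hind : ∀ s : Finset ι, ∃ p ∈ F, ∀ i ∈ s, g i p < c i := by
        intro s
        induction s using Finset.induction_on with
        | empty => exact ⟨x0, hx0, by simp⟩
        | insert a s ha ih =>
          obtain ⟨p, hpF, hps⟩ := ih
          obtain ⟨q, hqF, hqa⟩ := hq a
          refine ⟨(1/2 : ℝ) • p + (1/2 : ℝ) • q,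
            hconv hpF hqF (by norm_num) (by norm_num) (by norm_num), ?_⟩
          intro i hi
          have h1 := (hS p).1 (hfS hpF) i
          have h2 := (hS q).1 (hfS hqF) i
          simp only [map_add, map_smul, smul_eq_mul]
          rcases Finset.mem_insert.1 hi with rfl | hi
          · linarith
          · have := hps i hi; linarith
      obtain ⟨p, hpF, hps⟩ := hind Finset.univ
      obtain ⟨y, hyS, hyF⟩ : ∃ y ∈ S, y ∉ F := by
        by_contra h
        push Not at h
        exact hne (hfS.antisymm h)
      have hlt : f y < f p := by
        by_contra h
        push Not at h
        apply hyF
        rw [hf]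
        exact ⟨hyS, fun z hz => (hmax p hpF z hz).trans h⟩
      obtain ⟨ε, he, h3⟩ := eps_exists g c p (p - y) (fun j => Or.inl (hps j (Finset.mem_univ _)))
      have := hmax p hpF _ ((hS _).2 h3)
      simp only [map_add, map_smul, map_sub, smul_eq_mul] at this
      have : 0 < ε * (f p - f y) := mul_pos he (by linarith)
      linarith
    obtain ⟨i, hi⟩ := key
    refine ⟨i, Set.Subset.antisymm ?_ hi⟩
    have h1 : vectorSpan ℝ F = LinearMap.ker (g i) := by
      apply Submodule.eq_of_le_of_finrank_eq
      · apply hvs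
        intro x hx y hy
        rw [(hi hx).2, (hi hy).2]
      · rw [hdim, hker]
    have h2 : vectorSpan ℝ F ≤ LinearMap.ker (f : (P → ℝ) →ₗ[ℝ] ℝ) := by
      apply hvs
      intro x hx y hy
      exact le_antisymm (hmax y hy x (hfS hx)) (hmax x hx y (hfS hy))
    intro x hx
    have h3 : x - x0 ∈ LinearMap.ker (g i) := by
      rw [LinearMap.mem_ker, map_sub, hx.2, (hi hx0).2, sub_self]
    rw [← h1] at h3
    have h4 := h2 h3
    have h5 : f x = f x0 := by
      rw [LinearMap.mem_ker] at h4
      have h6 : f (x - x0) = 0 := h4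
      rw [map_sub] at h6
      linarith
    rw [hf]
    refine ⟨hx.1, fun y hy => ?_⟩
    rw [h5]
    exact hmax x0 hx0 y hy
  have : {F : Set (P → ℝ) | IsFacetOf P S F} = Set.range Φ := by
    ext F
    constructor
    · intro h; exact hsurj F h
    · rintro ⟨i, rfl⟩; exact hfacet i
  rw [this, ← Set.image_univ, Set.ncard_image_of_injective _ hinj, Set.ncard_univ]


/-- Linear part of the upper bound attached to a chain. -/
noncomputable def L {P : Type*} : List P → ((P → ℝ) →ₗ[ℝ] ℝ)
  | [] => 0
  | k :: l => (1/2 : ℝ) • (LinearMap.proj k + L l)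

/-- The upper bound attached to a chain. -/
noncomputable def B {P : Type*} (x : P → ℝ) : List P → ℝ
  | [] => 1
  | k :: l => (x k + B x l) / 2

theorem B_eq {P : Type*} (x : P → ℝ) (l : List P) : B x l = (1/2 : ℝ) ^ l.length + L l x := by
  induction l with
  | nil => simp [B, L]
  | cons k l ih =>
    simp only [B, L, ih, List.length_cons, pow_succ, LinearMap.smul_apply, LinearMap.add_apply,
      LinearMap.proj_apply, smul_eq_mul]
    ring

section
variable {P : Type*} [PartialOrder P]

theorem sat_nil {j : P} : IsSatChainToMax [j] ↔ IsMax j := by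
  simp [IsSatChainToMax, List.Chain']

theorem sat_cons {j k : P} {l : List P} :
    IsSatChainToMax (j :: k :: l) ↔ j ⋖ k ∧ IsSatChainToMax (k :: l) := by
  simp [IsSatChainToMax, List.Chain', List.isChain_cons_cons, List.getLast?_cons_cons, and_assoc]

theorem maxc_cons {j : P} {l : List P} :
    IsMaxChainList (j :: l) ↔ IsMin j ∧ IsSatChainToMax (j :: l) := by
  simp [IsSatChainToMax, IsMaxChainList]
  tauto

theorem sat_finite [Finite P] : {l : List P | IsSatChainToMax l}.Finite := by
  have := Fintype.ofFinite P
  apply (List.finite_length_le P (Fintype.card P)).subset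
  rintro l ⟨_, h, _⟩
  have h1 : l.IsChain (· < ·) := List.IsChain.imp (fun a b h => h.lt) h
  have h2 : l.Pairwise (· < ·) := List.isChain_iff_pairwise.1 h1
  have h3 : l.Nodup := h2.imp (fun h => h.ne)
  exact h3.length_le_card

theorem exists_sat [Finite P] (j : P) : ∃ l, IsSatChainToMax (j :: l) := by
  induction j using (wellFounded_gt : WellFounded (α := P) (· > ·)).induction with
  | _ j ih =>
    by_cases h : IsMax j
    · exact ⟨[], sat_nil.2 h⟩
    · obtain ⟨b, hb⟩ := not_isMax_iff.1 h
      obtain ⟨k, hk, _⟩ := exists_covBy_le_of_lt hb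
      obtain ⟨l, hl⟩ := ih k hk.lt
      exact ⟨k :: l, sat_cons.2 ⟨hk, hl⟩⟩

theorem vert_bound {x : P → ℝ} (hx : x ∈ enrichedOrderVerts P) (l : List P) :
    ∀ j, IsSatChainToMax (j :: l) → |x j| ≤ B x l := by
  obtain ⟨F, hF, h1, h2, h3⟩ := hx
  have habs : ∀ j, |x j| ≤ 1 := by
    intro j
    by_cases hj : j ∈ F
    · by_cases hm : j ∈ minSet F
      · rcases h1 j hm with h | h <;> simp [h]
      · simp [h2 j hj hm]
    · simp [h3 j hj]
  induction l with
  | nil => intro j _; exact habs j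
  | cons k l ih =>
    intro j hj
    obtain ⟨hjk, hs⟩ := sat_cons.1 hj
    have hk := ih k hs
    simp only [B]
    by_cases hjF : j ∈ F
    · have hkF : k ∈ F := hF hjk.le hjF
      have hkm : k ∉ minSet F := fun h => hjk.lt.ne (h.2 j hjF hjk.le)
      have := h2 k hkF hkm
      rw [this] at hk ⊢
      have := habs j
      simp at hk
      linarith
    · rw [h3 j hjF]
      have := neg_abs_le (x k)
      simp
      linarith

theorem mono_of_cov [Finite P] {t : P → ℝ} (h : ∀ j k, j ⋖ k → t j ≤ t k) : Monotone t := by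
  intro a b
  induction a using (wellFounded_gt : WellFounded (α := P) (· > ·)).induction with
  | _ a ih =>
    intro hab
    rcases hab.eq_or_lt with rfl | hab
    · exact le_rfl
    · obtain ⟨k, hk, hkb⟩ := exists_covBy_le_of_lt hab
      exact (h _ _ hk).trans (ih k hk.lt hkb)

theorem verts_finite [Finite P] : (enrichedOrderVerts P).Finite := by
  apply (Set.Finite.pi (fun _ : P => Set.toFinite ({1, -1, 0} : Set ℝ))).subset
  rintro x ⟨F, hF, h1, h2, h3⟩ j -
  by_cases hj : j ∈ F
  · by_cases hm : j ∈ minSet F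
    · rcases h1 j hm with h | h <;> simp [h]
    · simp [h2 j hj hm]
  · simp [h3 j hj]

theorem theta_vert [Finite P] {t U : P → ℝ} (htU : ∀ j, t j ≤ U j) (hUt : ∀ j k, j ⋖ k → U j ≤ t k)
    (θ : ℝ) : (fun j => 2 * (if θ < t j then (1 : ℝ) else 0) - (if θ < U j then (1 : ℝ) else 0)) ∈
      enrichedOrderVerts P := by
  have hlt : ∀ a b, a < b → U a ≤ t b := by
    intro a b hab
    have hm : Monotone t := mono_of_cov fun j k h => (htU j).trans (hUt j k h)
    obtain ⟨k, hk, hkb⟩ := exists_covBy_le_of_lt hab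
    exact (hUt _ _ hk).trans (hm hkb)
  refine ⟨{j | θ < U j}, ?_, ?_, ?_, ?_⟩
  · intro a b hab ha
    rcases hab.eq_or_lt with rfl | hab
    · exact ha
    · exact lt_of_lt_of_le ha ((hlt a b hab).trans (htU b))
  · rintro i ⟨hi, -⟩
    have hi' : θ < U i := hi
    by_cases h : θ < t i
    · left; simp [h, hi']; norm_num
    · right; simp [h, hi']
  · intro i hi hm
    have hi' : θ < U i := hi
    have h : θ < t i := by
      by_contra h
      apply hm
      refine ⟨hi, fun b hb hbi => ?_⟩
      by_contra hne
      have h1 := hlt b i (lt_of_le_of_ne hbi hne)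
      have h2 : θ < U b := hb
      linarith
    simp [h, hi']; norm_num
  · intro i hi
    have hi' : ¬ θ < U i := hi
    have h : ¬ θ < t i := fun h => hi' (h.trans_le (htU i))
    simp [h, hi']

theorem int_ind {a : ℝ} (h0 : 0 ≤ a) (h1 : a ≤ 1) :
    MeasureTheory.Integrable (fun θ : ℝ => if θ < a then (1 : ℝ) else 0)
      (MeasureTheory.volume.restrict (Set.Ico 0 1)) ∧
    ∫ θ in Set.Ico (0 : ℝ) 1, (if θ < a then (1 : ℝ) else 0) = a := by
  have he : (fun θ : ℝ => if θ < a then (1 : ℝ) else 0) = (Set.Iio a).indicator (fun _ => 1) := by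
    ext θ; simp [Set.indicator]
  rw [he]
  constructor
  · exact (MeasureTheory.integrable_const (1 : ℝ)).indicator measurableSet_Iio
  · rw [MeasureTheory.integral_indicator measurableSet_Iio,
      MeasureTheory.Measure.restrict_restrict measurableSet_Iio]
    have : Set.Iio a ∩ Set.Ico 0 1 = Set.Ico 0 a := by
      ext θ; simp; constructor
      · rintro ⟨h, h', _⟩; exact ⟨h', h⟩
      · rintro ⟨h, h'⟩; exact ⟨h', h, h'.trans_le h1⟩
    rw [this]
    simp [h0]

theorem mem_hull [Finite P] {t U : P → ℝ} (h0 : ∀ j, 0 ≤ t j) (htU : ∀ j, t j ≤ U j)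
    (hU1 : ∀ j, U j ≤ 1) (hUt : ∀ j k, j ⋖ k → U j ≤ t k) :
    (fun j => 2 * t j - U j) ∈ convexHull ℝ (enrichedOrderVerts P) := by
  have := Fintype.ofFinite P
  let μ : MeasureTheory.Measure ℝ := MeasureTheory.volume.restrict (Set.Ico 0 1)
  have hμ : MeasureTheory.IsProbabilityMeasure μ := ⟨by simp [μ]⟩
  let f : ℝ → P → ℝ := fun θ j =>
    2 * (if θ < t j then (1 : ℝ) else 0) - (if θ < U j then (1 : ℝ) else 0)
  have ht := fun j => int_ind (h0 j) ((htU j).trans (hU1 j))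
  have hu := fun j => int_ind ((h0 j).trans (htU j)) (hU1 j)
  have hint : ∀ j, MeasureTheory.Integrable (fun θ => f θ j) μ := by
    intro j
    exact ((ht j).1.const_mul 2).sub (hu j).1
  have hmem : ∫ θ, f θ ∂μ ∈ convexHull ℝ (enrichedOrderVerts P) := by
    have hcl : IsClosed (convexHull ℝ (enrichedOrderVerts P)) :=
      Set.Finite.isClosed_convexHull ℝ verts_finite
    refine Convex.integral_mem (convex_convexHull ℝ (enrichedOrderVerts P)) hcl ?_ ?_
    · filter_upwards with θ
      exact subset_convexHull ℝ _ (theta_vert htU hUt θ)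
    · exact MeasureTheory.Integrable.of_eval hint
  convert hmem using 1
  ext j
  rw [MeasureTheory.eval_integral hint]
  simp only [f]
  rw [MeasureTheory.integral_sub ((ht j).1.const_mul 2) (hu j).1, MeasureTheory.integral_const_mul]
  rw [(ht j).2, (hu j).2]

theorem mem_hull_iff [Finite P] (x : P → ℝ) : x ∈ convexHull ℝ (enrichedOrderVerts P) ↔
    (∀ j l, IsSatChainToMax (j :: l) → x j ≤ B x l) ∧
    (∀ j l, IsMin j → IsSatChainToMax (j :: l) → - x j ≤ B x l) := by
  constructor
  · intro hx
    have hc : ∀ (s : ℝ) (j : P) (l : List P),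
        Convex ℝ {x : P → ℝ | s * x j ≤ B x l} := by
      intro s j l
      have : {x : P → ℝ | s * x j ≤ B x l} =
          {x : P → ℝ | (s • LinearMap.proj j - L l : (P → ℝ) →ₗ[ℝ] ℝ) x ≤ (1/2) ^ l.length} := by
        ext x
        simp [B_eq]
      rw [this]
      exact convex_halfSpace_le (LinearMap.isLinear _) _
    constructor
    · intro j l hl
      have := convexHull_min (s := enrichedOrderVerts P)
        (fun y hy => by
          have := (le_abs_self _).trans (vert_bound hy l j hl)
          simpa using this) (hc 1 j l) hx
      simpa using this
    · intro j l _ hl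
      have := convexHull_min (s := enrichedOrderVerts P)
        (fun y hy => by
          have := (neg_le_abs _).trans (vert_bound hy l j hl)
          simpa using this) (hc (-1) j l) hx
      simpa using this
  · rintro ⟨h1, h2⟩
    have hL : ∀ j, ∃ l, IsSatChainToMax (j :: l) ∧
        ∀ l', IsSatChainToMax (j :: l') → B x l ≤ B x l' := by
      intro j
      have hfin : {l : List P | IsSatChainToMax (j :: l)}.Finite :=
        sat_finite.preimage (fun a _ b _ h => (List.cons.inj h).2)
      obtain ⟨l, hl, hl'⟩ := Set.exists_min_image _ (B x) hfin (exists_sat j)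
      exact ⟨l, hl, hl'⟩
    choose M hM hM' using hL
    set U : P → ℝ := fun j => B x (M j) with hU
    set t : P → ℝ := fun j => (x j + U j) / 2 with ht
    have hUt : ∀ j k, j ⋖ k → U j ≤ t k := by
      intro j k hjk
      exact hM' j (k :: M k) (sat_cons.2 ⟨hjk, hM k⟩)
    have htU : ∀ j, t j ≤ U j := by
      intro j
      have := h1 j _ (hM j)
      simp only [ht, hU]
      linarith
    have hx : x = fun j => 2 * t j - U j := by
      ext j; simp only [ht]; ring
    have hm : Monotone t := mono_of_cov fun j k h => (htU j).trans (hUt j k h)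
    have h0 : ∀ j, 0 ≤ t j := by
      intro j
      induction j using (wellFounded_lt : WellFounded (α := P) (· < ·)).induction with
      | _ j ih =>
        by_cases h : IsMin j
        · have := h2 j _ h (hM j)
          simp only [ht, hU]
          linarith
        · obtain ⟨b, hb⟩ := not_isMin_iff.1 h
          exact (ih b hb).trans (hm hb.le)
    have hU1 : ∀ j, U j ≤ 1 := by
      intro j
      induction j using (wellFounded_gt : WellFounded (α := P) (· > ·)).induction with
      | _ j ih =>
        by_cases h : IsMax j
        · exact hM' j [] (sat_nil.2 h)
        · obtain ⟨b, hb⟩ := not_isMax_iff.1 h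
          obtain ⟨k, hk, _⟩ := exists_covBy_le_of_lt hb
          exact (hUt j k hk).trans ((htU k).trans (ih k hk.lt))
    rw [hx]
    exact mem_hull h0 htU hU1 hUt

/-- `b` is the strict `t`-minimizer among the covers of `a`. -/
def R (t : P → ℝ) (a b : P) : Prop := a ⋖ b ∧ ∀ k, a ⋖ k → k ≠ b → t b < t k

theorem transport {t t' : P → ℝ} {b : P}
    (h : ∀ p q, ¬ p ≤ b → ¬ q ≤ b → t p < t q → t' p < t' q) (l : List P) :
    ∀ c, b ≤ c → List.IsChain (R t) (c :: l) → List.IsChain (R t') (c :: l) := by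
  induction l with
  | nil => intro c _ _; simp
  | cons d l ih =>
    intro c hbc hc
    rw [List.isChain_cons_cons] at hc ⊢
    obtain ⟨⟨h1, h2⟩, h3⟩ := hc
    have hn : ∀ k, c ⋖ k → ¬ k ≤ b := fun k hk hkb => (hbc.trans_lt hk.lt).not_ge hkb
    exact ⟨⟨h1, fun k hk hkd => h _ _ (hn d h1) (hn k hk) (h2 k hk hkd)⟩,
      ih d (hbc.trans h1.le) h3⟩

theorem exists_t [Finite P] (l : List P) : ∀ a, IsSatChainToMax (a :: l) →
    ∃ t : P → ℝ, StrictMono t ∧ List.IsChain (R t) (a :: l) := by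
  have := Fintype.ofFinite P
  induction l with
  | nil =>
    intro a _
    refine ⟨fun p => ((Set.Iio p).ncard : ℝ), ?_, by simp⟩
    intro p q hpq
    simp only [Nat.cast_lt]
    exact Set.ncard_lt_ncard (Set.Iio_ssubset_Iio hpq) (Set.toFinite _)
  | cons b l ih =>
    intro a ha
    obtain ⟨hab, hb⟩ := sat_cons.1 ha
    obtain ⟨t, ht, htc⟩ := ih b hb
    classical
    set N : ℝ := 1 + 2 * ∑ p, |t p| with hN
    have hle : ∀ p, |t p| ≤ ∑ p, |t p| := fun p =>
      Finset.single_le_sum (f := fun p => |t p|) (fun _ _ => abs_nonneg _) (Finset.mem_univ p)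
    have hN0 : 0 < N := by
      have := (abs_nonneg _).trans (hle a)
      linarith
    have hNt : ∀ p q, t p < t q + N := by
      intro p q
      have h1 := le_abs_self (t p)
      have h2 := neg_abs_le (t q)
      have := hle p
      have := hle q
      linarith
    refine ⟨fun p => t p + if p ≤ b then 0 else N, ?_, ?_⟩
    · intro p q hpq
      have := ht hpq
      by_cases hq : q ≤ b
      · simp [hq, hpq.le.trans hq, this]
      · by_cases hp : p ≤ b
        · simp [hp, hq]; linarith
        · simp [hp, hq, this]
    · rw [List.isChain_cons_cons]
      refine ⟨⟨hab, ?_⟩, transport (t := t) (b := b) ?_ l b le_rfl htc⟩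
      · intro k hk hkb
        have : ¬ k ≤ b := fun h => hab.2 hk.lt (lt_of_le_of_ne h hkb)
        simp [this, hNt]
      · intro p q hp hq hpq
        simp [hp, hq, hpq]

theorem exists_t01 [Finite P] (l : List P) (a : P) (ha : IsSatChainToMax (a :: l)) :
    ∃ t : P → ℝ, StrictMono t ∧ (∀ p, 0 < t p) ∧ (∀ p, t p < 1) ∧
      List.IsChain (R t) (a :: l) := by
  have := Fintype.ofFinite P
  obtain ⟨t, ht, htc⟩ := exists_t l a ha
  set M : ℝ := 1 + ∑ p, |t p| with hM
  have hle : ∀ p, |t p| ≤ ∑ p, |t p| := fun p =>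
    Finset.single_le_sum (f := fun p => |t p|) (fun _ _ => abs_nonneg _) (Finset.mem_univ p)
  have hM0 : 0 < M := by
    have := (abs_nonneg _).trans (hle a)
    linarith
  have hmono : ∀ p q, t p < t q → (t p + M) / (2 * M) < (t q + M) / (2 * M) := by
    intro p q h
    gcongr
  refine ⟨fun p => (t p + M) / (2 * M), fun p q h => hmono _ _ (ht h), ?_, ?_,
    transport (t := t) (b := a) (fun p q _ _ h => hmono p q h) l a le_rfl htc⟩
  · intro p
    have := hle p
    have := neg_abs_le (t p)
    apply div_pos <;> linarith
  · intro p
    have := hle p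
    have := le_abs_self (t p)
    rw [div_lt_one (by linarith)]
    linarith

open Classical in
/-- The minimum of `t` over covers of `j` (or one if there are none). -/
noncomputable def U [Fintype P] (t : P → ℝ) (j : P) : ℝ :=
  if h : (Finset.univ.filter (fun k => j ⋖ k)).Nonempty then
    (Finset.univ.filter (fun k => j ⋖ k)).inf' h t else 1

theorem U_le [Fintype P] (t : P → ℝ) {j k : P} (h : j ⋖ k) : U t j ≤ t k := by
  classical
  have hk : k ∈ Finset.univ.filter (fun k => j ⋖ k) := by simpa using h
  unfold U
  rw [dif_pos ⟨k, hk⟩]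
  exact Finset.inf'_le _ hk

theorem U_cases [Fintype P] (t : P → ℝ) (j : P) :
    (IsMax j ∧ U t j = 1) ∨ ∃ k, j ⋖ k ∧ U t j = t k := by
  classical
  unfold U
  by_cases h : (Finset.univ.filter (fun k => j ⋖ k)).Nonempty
  · right
    rw [dif_pos h]
    obtain ⟨k, hk, hk'⟩ := Finset.exists_mem_eq_inf' h t
    exact ⟨k, by simpa using hk, hk'⟩
  · left
    rw [dif_neg h]
    refine ⟨?_, rfl⟩
    by_contra hm
    obtain ⟨b, hb⟩ := not_isMax_iff.1 hm
    obtain ⟨k, hk, _⟩ := exists_covBy_le_of_lt hb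
    exact h ⟨k, by simpa using hk⟩

theorem U_congr [Fintype P] {t t' : P → ℝ} {j : P} (h : ∀ k, j ⋖ k → t k = t' k) :
    U t j = U t' j := by
  apply le_antisymm
  · rcases U_cases t' j with ⟨h1, h2⟩ | ⟨k, hk, h2⟩
    · rcases U_cases t j with ⟨h3, h4⟩ | ⟨k, hk, h4⟩
      · rw [h2, h4]
      · exact absurd hk.lt h1.not_lt
    · rw [h2, ← h k hk]; exact U_le t hk
  · rcases U_cases t j with ⟨h1, h2⟩ | ⟨k, hk, h2⟩
    · rcases U_cases t' j with ⟨h3, h4⟩ | ⟨k, hk, h4⟩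
      · rw [h2, h4]
      · exact absurd hk.lt h1.not_lt
    · rw [h2, h k hk]; exact U_le t' hk

theorem U_le_B [Fintype P] (t : P → ℝ) (l : List P) :
    ∀ j, IsSatChainToMax (j :: l) → U t j ≤ B (fun j => 2 * t j - U t j) l := by
  induction l with
  | nil =>
    intro j hj
    rcases U_cases t j with ⟨_, h⟩ | ⟨k, hk, _⟩
    · simp [B, h]
    · exact absurd hk.lt (sat_nil.1 hj).not_lt
  | cons k l ih =>
    intro j hj
    obtain ⟨hjk, hk⟩ := sat_cons.1 hj
    have h1 := ih k hk
    have h2 := U_le t hjk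
    simp only [B]
    linarith

theorem B_unique [Fintype P] (t : P → ℝ) (l : List P) :
    ∀ j, IsSatChainToMax (j :: l) → List.IsChain (R t) (j :: l) →
      B (fun j => 2 * t j - U t j) l = U t j ∧
      ∀ l', IsSatChainToMax (j :: l') → B (fun j => 2 * t j - U t j) l' ≤ U t j → l' = l := by
  induction l with
  | nil =>
    intro j hj _
    constructor
    · rcases U_cases t j with ⟨_, h⟩ | ⟨k, hk, _⟩
      · simp [B, h]
      · exact absurd hk.lt (sat_nil.1 hj).not_lt
    · rintro (_ | ⟨k, l'⟩) hl' _
      · rfl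
      · exact absurd (sat_cons.1 hl').1.lt (sat_nil.1 hj).not_lt
  | cons b l ih =>
    intro j hj hR
    obtain ⟨hjb, hb⟩ := sat_cons.1 hj
    rw [List.isChain_cons_cons] at hR
    obtain ⟨⟨_, hR1⟩, hR2⟩ := hR
    obtain ⟨i1, i2⟩ := ih b hb hR2
    have hU : U t j = t b := by
      rcases U_cases t j with ⟨h, _⟩ | ⟨k, hk, h⟩
      · exact absurd hjb.lt h.not_lt
      · by_cases hkb : k = b
        · rw [h, hkb]
        · have := hR1 k hk hkb
          have := U_le t hjb
          linarith
    constructor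
    · simp only [B]
      rw [i1, hU]; ring
    · rintro (_ | ⟨k, l'⟩) hl' hB
      · exact absurd hjb.lt (sat_nil.1 hl').not_lt
      · obtain ⟨hjk, hk⟩ := sat_cons.1 hl'
        have h1 := U_le_B t l' k hk
        simp only [B] at hB
        have hkb : k = b := by
          by_contra hkb
          have := hR1 k hjk hkb
          linarith
        subst hkb
        rw [i2 l' hk (by linarith)]

theorem point_plus [Fintype P] (i : P) (l : List P) (hi : IsSatChainToMax (i :: l)) :
    ∃ x : P → ℝ, x i = B x l ∧
      (∀ j l', IsSatChainToMax (j :: l') → j :: l' ≠ i :: l → x j < B x l') ∧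
      (∀ j l', IsSatChainToMax (j :: l') → - x j < B x l') := by
  classical
  obtain ⟨t0, hm, h0, h1, hR⟩ := exists_t01 l i hi
  have hlt0 : ∀ j, t0 j < U t0 j := by
    intro j
    rcases U_cases t0 j with ⟨_, h⟩ | ⟨k, hk, h⟩
    · rw [h]; exact h1 j
    · rw [h]; exact hm hk.lt
  set t := Function.update t0 i (U t0 i) with ht
  have hti : t i = U t0 i := by simp [ht]
  have htj : ∀ j, j ≠ i → t j = t0 j := fun j hj => by simp [ht, hj]
  have htt : ∀ j, t0 j ≤ t j := by
    intro j
    by_cases h : j = i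
    · subst h; rw [hti]; exact (hlt0 j).le
    · rw [htj j h]
  have hUi : U t i = U t0 i := U_congr fun k hk => htj k hk.lt.ne'
  have hlt : ∀ j, j ≠ i → t j < U t j := by
    intro j hj
    rw [htj j hj]
    rcases U_cases t j with ⟨_, h⟩ | ⟨k, hk, h⟩
    · rw [h]; exact h1 j
    · rw [h]; exact (hm hk.lt).trans_le (htt k)
  have hpos : ∀ j, 0 < t j := fun j => (h0 j).trans_le (htt j)
  have hR' : List.IsChain (R t) (i :: l) := by
    refine transport (t := t0) (b := i) ?_ l i le_rfl hR
    intro p q hp hq h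
    rw [htj p (fun h => hp h.le), htj q (fun h => hq h.le)]
    exact h
  obtain ⟨b1, b2⟩ := B_unique t l i hi hR'
  refine ⟨fun j => 2 * t j - U t j, ?_, ?_, ?_⟩
  · rw [b1]; simp only [hti, hUi]; ring
  · intro j l' hl' hne
    have hB := U_le_B t l' j hl'
    by_cases hj : j = i
    · subst hj
      have : U t j < B (fun j => 2 * t j - U t j) l' := by
        by_contra h
        exact hne (by rw [b2 l' hl' (not_lt.1 h)])
      refine lt_of_eq_of_lt ?_ this
      simp only [hti, hUi]; ring
    · have := hlt j hj
      refine lt_of_lt_of_le ?_ hB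
      simp only
      linarith
  · intro j l' hl'
    have hB := U_le_B t l' j hl'
    have := hpos j
    refine lt_of_lt_of_le ?_ hB
    simp only
    linarith

theorem point_minus [Fintype P] (i : P) (l : List P) (hmin : IsMin i)
    (hi : IsSatChainToMax (i :: l)) :
    ∃ x : P → ℝ, - x i = B x l ∧
      (∀ j l', IsSatChainToMax (j :: l') → x j < B x l') ∧
      (∀ j l', IsSatChainToMax (j :: l') → j :: l' ≠ i :: l → - x j < B x l') := by
  classical
  obtain ⟨t0, hm, h0, h1, hR⟩ := exists_t01 l i hi
  have hlt0 : ∀ j, t0 j < U t0 j := by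
    intro j
    rcases U_cases t0 j with ⟨_, h⟩ | ⟨k, hk, h⟩
    · rw [h]; exact h1 j
    · rw [h]; exact hm hk.lt
  set t := Function.update t0 i 0 with ht
  have hti : t i = 0 := by simp [ht]
  have htj : ∀ j, j ≠ i → t j = t0 j := fun j hj => by simp [ht, hj]
  have htt : ∀ j, t j ≤ t0 j := by
    intro j
    by_cases h : j = i
    · subst h; rw [hti]; exact (h0 j).le
    · rw [htj j h]
  have hUt : ∀ j, U t j = U t0 j := fun j => U_congr fun k hk => htj k (by
    rintro rfl; exact hmin.not_lt hk.lt)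
  have hlt : ∀ j, t j < U t j := fun j => by
    rw [hUt]; exact (htt j).trans_lt (hlt0 j)
  have hR' : List.IsChain (R t) (i :: l) := by
    refine transport (t := t0) (b := i) ?_ l i le_rfl hR
    intro p q hp hq h
    rw [htj p (fun h => hp h.le), htj q (fun h => hq h.le)]
    exact h
  obtain ⟨b1, b2⟩ := B_unique t l i hi hR'
  refine ⟨fun j => 2 * t j - U t j, ?_, ?_, ?_⟩
  · rw [b1]; simp only [hti]; ring
  · intro j l' hl'
    have hB := U_le_B t l' j hl'
    have := hlt j
    refine lt_of_lt_of_le ?_ hB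
    simp only
    linarith
  · intro j l' hl' hne
    have hB := U_le_B t l' j hl'
    by_cases hj : j = i
    · subst hj
      have : U t j < B (fun j => 2 * t j - U t j) l' := by
        by_contra h
        exact hne (by rw [b2 l' hl' (not_lt.1 h)])
      refine lt_of_eq_of_lt ?_ this
      simp only [hti]; ring
    · have := h0 j
      rw [← htj j hj] at this
      refine lt_of_lt_of_le ?_ hB
      simp only
      linarith

end

/-- The functional attached to a chain and a sign. -/
noncomputable def G {P : Type*} (s : ℝ) : List P → ((P → ℝ) →ₗ[ℝ] ℝ)
  | [] => 0
  | j :: l => s • LinearMap.proj j - L l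

theorem G_le {P : Type*} (s : ℝ) (j : P) (l : List P) (x : P → ℝ) :
    G s (j :: l) x ≤ (1/2 : ℝ) ^ (j :: l).tail.length ↔ s * x j ≤ B x l := by
  simp [G, B_eq]

theorem G_lt {P : Type*} (s : ℝ) (j : P) (l : List P) (x : P → ℝ) :
    G s (j :: l) x < (1/2 : ℝ) ^ (j :: l).tail.length ↔ s * x j < B x l := by
  simp [G, B_eq, sub_lt_iff_lt_add]

theorem G_eq {P : Type*} (s : ℝ) (j : P) (l : List P) (x : P → ℝ) :
    G s (j :: l) x = (1/2 : ℝ) ^ (j :: l).tail.length ↔ s * x j = B x l := by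
  simp [G, B_eq, sub_eq_iff_eq_add]

end EOP

/-- The number of facets of `O^(e)_P` is `sc(P) + mc(P)`. -/
theorem stmt12 (P : Type*) [Fintype P] [PartialOrder P] [Nonempty P] :
    Set.ncard {F : Set (P → ℝ) | IsFacetOf P (convexHull ℝ (enrichedOrderVerts P)) F}
      = Nat.card {l : List P // IsSatChainToMax l}
        + Nat.card {l : List P // IsMaxChainList l} := by
  have hsf : Finite {l : List P // IsSatChainToMax l} := EOP.sat_finite
  have hmf : Finite {l : List P // IsMaxChainList l} := by
    have : {l : List P | IsMaxChainList l}.Finite :=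
      EOP.sat_finite.subset (fun l hl => ⟨hl.1, hl.2.1, hl.2.2.2⟩)
    exact this
  rw [← Nat.card_sum]
  apply EOP.facet_count P (convexHull ℝ (enrichedOrderVerts P))
    (Sum.elim (fun l => EOP.G 1 l.1) (fun l => EOP.G (-1) l.1))
    (Sum.elim (fun l => (1/2 : ℝ) ^ l.1.tail.length) (fun l => (1/2 : ℝ) ^ l.1.tail.length))
  · rintro (l | l) <;> simp
  · intro x
    rw [EOP.mem_hull_iff]
    constructor
    · rintro ⟨h1, h2⟩ (⟨l, hl⟩ | ⟨l, hl⟩)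
      · obtain _ | ⟨j, l⟩ := l
        · exact absurd rfl hl.1
        · simp only [Sum.elim_inl]
          rw [EOP.G_le, one_mul]
          exact h1 j l hl
      · obtain _ | ⟨j, l⟩ := l
        · exact absurd rfl hl.1
        · simp only [Sum.elim_inr]
          rw [EOP.G_le, neg_one_mul]
          obtain ⟨h3, h4⟩ := EOP.maxc_cons.1 hl
          exact h2 j l h3 h4
    · intro h
      constructor
      · intro j l hl
        have := h (Sum.inl ⟨_, hl⟩)
        simp only [Sum.elim_inl] at this
        rwa [EOP.G_le, one_mul] at this
      · intro j l hj hl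
        have := h (Sum.inr ⟨_, EOP.maxc_cons.2 ⟨hj, hl⟩⟩)
        simp only [Sum.elim_inr] at this
        rwa [EOP.G_le, neg_one_mul] at this
  · rintro (⟨l, hl⟩ | ⟨l, hl⟩)
    · obtain _ | ⟨j, l⟩ := l
      · exact absurd rfl hl.1
      obtain ⟨x, h1, h2, h3⟩ := EOP.point_plus j l hl
      refine ⟨x, ?_, ?_⟩
      · simp only [Sum.elim_inl]
        rw [EOP.G_eq, one_mul]
        exact h1
      · rintro (⟨l', hl'⟩ | ⟨l', hl'⟩) hne
        · obtain _ | ⟨j', l'⟩ := l'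
          · exact absurd rfl hl'.1
          simp only [Sum.elim_inl]
          rw [EOP.G_lt, one_mul]
          exact h2 j' l' hl' (fun h => hne (by congr))
        · obtain _ | ⟨j', l'⟩ := l'
          · exact absurd rfl hl'.1
          simp only [Sum.elim_inr]
          rw [EOP.G_lt, neg_one_mul]
          exact h3 j' l' (EOP.maxc_cons.1 hl').2
    · obtain _ | ⟨j, l⟩ := l
      · exact absurd rfl hl.1
      obtain ⟨hmin, hs⟩ := EOP.maxc_cons.1 hl
      obtain ⟨x, h1, h2, h3⟩ := EOP.point_minus j l hmin hs
      refine ⟨x, ?_, ?_⟩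
      · simp only [Sum.elim_inr]
        rw [EOP.G_eq, neg_one_mul]
        exact h1
      · rintro (⟨l', hl'⟩ | ⟨l', hl'⟩) hne
        · obtain _ | ⟨j', l'⟩ := l'
          · exact absurd rfl hl'.1
          simp only [Sum.elim_inl]
          rw [EOP.G_lt, one_mul]
          exact h2 j' l' hl'
        · obtain _ | ⟨j', l'⟩ := l'
          · exact absurd rfl hl'.1
          simp only [Sum.elim_inr]
          rw [EOP.G_lt, neg_one_mul]
          exact h3 j' l' (EOP.maxc_cons.1 hl').2 (fun h => hne (by congr))
end

section
/- Let P be a finite poset on {1,...,n}. The number of facets of the enriched chain polytope C^(e)_P equals Σ_{ℓ=0}^{n−1} 2^{ℓ+1} mc_ℓ(P), where mc_ℓ(P) is the number of maximal chains of P of length ℓ (i.e., with ℓ+1 elements). -/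
/-- The vertex set of the enriched chain polytope: signed indicator vectors of
antichains. -/
def enrichedChainVerts (P : Type*) [PartialOrder P] : Set (P → ℝ) :=
  {x | ∃ A : Set P, IsAntichain (· ≤ ·) A ∧
    (∀ i ∈ A, x i = 1 ∨ x i = -1) ∧ (∀ i, i ∉ A → x i = 0)}

namespace ECP

open Set MeasureTheory

variable {P : Type*} [PartialOrder P]

theorem maxl_pairwise {l : List P} (h : IsMaxChainList l) : l.Pairwise (· < ·) := by
  have h2 : List.IsChain (· ⋖ ·) l := h.2.1
  have h3 : List.IsChain (· < ·) l := h2.imp (fun _ _ hab => hab.lt)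
  exact List.isChain_iff_pairwise.1 h3

theorem maxl_nodup {l : List P} (h : IsMaxChainList l) : l.Nodup :=
  (maxl_pairwise h).imp (fun hab => hab.ne)

theorem maxl_cmp {l : List P} (h : IsMaxChainList l) {a b : P} (ha : a ∈ l) (hb : b ∈ l) :
    a ≤ b ∨ b ≤ a := by
  by_cases hab : a = b
  · exact Or.inl hab.le
  · have := (maxl_pairwise h).imp (S := fun x y => x ≤ y ∨ y ≤ x) (fun hab => Or.inl hab.le)
    have hsym : Std.Symm (fun x y : P => x ≤ y ∨ y ≤ x) := ⟨fun _ _ h => Or.symm h⟩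
    exact this.forall ha hb hab

theorem no_gap (j : P) : ∀ l : List P, l ≠ [] → List.IsChain (· ⋖ ·) l →
    (∀ a ∈ l.head?, a < j) → (∀ a ∈ l.getLast?, j < a) → (∀ x ∈ l, x < j ∨ j < x) → False
  | [], h, _, _, _, _ => h rfl
  | [a], _, _, h1, h2, _ => lt_asymm (h1 a (by simp)) (h2 a (by simp))
  | a :: b :: t, _, hc, h1, h2, h3 => by
    rw [List.isChain_cons_cons] at hc
    rcases h3 b (by simp) with hb | hb
    · refine no_gap j (b :: t) (by simp) hc.2 ?_ ?_ ?_
      · intro x hx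
        simp at hx
        exact hx ▸ hb
      · intro x hx
        apply h2
        simpa using hx
      · intro x hx
        exact h3 x (List.mem_cons_of_mem _ hx)
    · exact hc.1.2 (h1 a (by simp)) hb

theorem maxl_max {l : List P} (h : IsMaxChainList l) {j : P} (hj : j ∉ l) :
    ∃ i ∈ l, ¬ i ≤ j ∧ ¬ j ≤ i := by
  by_contra hcon
  push Not at hcon
  have h3 : ∀ x ∈ l, x < j ∨ j < x := by
    intro x hx
    have hne : x ≠ j := fun e => hj (e ▸ hx)
    by_cases hxj : x ≤ j
    · exact Or.inl (lt_of_le_of_ne hxj hne)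
    · exact Or.inr (lt_of_le_of_ne (hcon x hx hxj) hne.symm)
  obtain ⟨h0, hc, ⟨a, ha, hamin⟩, ⟨b, hb, hbmax⟩⟩ := h
  refine no_gap j l h0 hc ?_ ?_ h3
  · intro x hx
    rw [ha] at hx
    simp at hx
    subst hx
    rcases h3 a (List.mem_of_mem_head? ha) with h | h
    · exact h
    · exact absurd h hamin.not_lt
  · intro x hx
    rw [hb] at hx
    simp at hx
    subst hx
    rcases h3 b (List.mem_of_mem_getLast? hb) with h | h
    · exact absurd h hbmax.not_lt
    · exact h

theorem exists_sorted (s : Finset P) (hs : IsChain (· ≤ ·) (s : Set P)) :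
    ∃ l : List P, l.Pairwise (· < ·) ∧ ∀ i, i ∈ l ↔ i ∈ s := by
  classical
  obtain ⟨r, hr, hle⟩ := extend_partialOrder (α := P) (· ≤ ·)
  refine ⟨s.sort r, ?_, fun i => Finset.mem_sort r⟩
  have h1 := (s.pairwise_sort r).and (s.sort_nodup r)
  refine h1.imp_of_mem ?_
  intro a b ha hb hab
  rw [Finset.mem_sort] at ha hb
  rcases hs ha hb hab.2 with h | h
  · exact lt_of_le_of_ne h hab.2
  · exact absurd (antisymm_of r hab.1 (hle _ _ h)) hab.2

theorem exists_maxl [Fintype P] [Nonempty P] (s : Finset P) (hs : IsChain (· ≤ ·) (s : Set P)) :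
    ∃ l : List P, IsMaxChainList l ∧ ∀ i ∈ s, i ∈ l := by
  classical
  obtain ⟨M, hM, hsM⟩ := hs.exists_maxChain
  obtain ⟨l, hl, hlM⟩ := exists_sorted M.toFinset (by simpa using hM.1)
  simp only [Set.mem_toFinset] at hlM
  have key : ∀ c, (∀ x ∈ l, x ≤ c ∨ c ≤ x) → c ∈ l := by
    intro c hc
    have : M = insert c M := hM.2 (hM.1.insert (fun b hb _ => (hc b ((hlM b).2 hb)).symm))
      (Set.subset_insert _ _)
    rw [hlM, this]
    exact Set.mem_insert _ _
  have hne : l ≠ [] := by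
    rintro rfl
    obtain ⟨p⟩ := ‹Nonempty P›
    simpa using key p (by simp)
  refine ⟨l, ⟨hne, ?_, ?_, ?_⟩, fun i hi => (hlM i).2 (hsM hi)⟩
  · show List.IsChain _ l
    rw [List.isChain_iff_forall_rel_of_append_cons_cons]
    rintro a b l₁ l₂ rfl
    simp only [List.pairwise_append, List.pairwise_cons, List.mem_cons] at hl
    obtain ⟨-, ⟨h1, h2, -⟩, h3⟩ := hl
    refine ⟨h1 b (Or.inl rfl), ?_⟩
    intro c hac hcb
    have hc := key c (by
      intro x hx
      simp only [List.mem_append, List.mem_cons] at hx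
      rcases hx with hx | rfl | rfl | hx
      · exact Or.inl ((h3 x hx a (Or.inl rfl)).trans hac).le
      · exact Or.inl hac.le
      · exact Or.inr hcb.le
      · exact Or.inr (hcb.trans (h2 x hx)).le)
    simp only [List.mem_append, List.mem_cons] at hc
    rcases hc with hx | rfl | rfl | hx
    · exact lt_asymm hac (h3 c hx a (Or.inl rfl))
    · exact lt_irrefl _ hac
    · exact lt_irrefl _ hcb
    · exact lt_asymm hcb (h2 c hx)
  · obtain ⟨a, t, rfl⟩ := List.exists_cons_of_ne_nil hne
    refine ⟨a, rfl, ?_⟩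
    rw [List.pairwise_cons] at hl
    rw [isMin_iff_forall_not_lt]
    intro c hc
    have h := key c (by
      intro x hx
      rcases List.mem_cons.1 hx with rfl | hx
      · exact Or.inr hc.le
      · exact Or.inr (hc.trans (hl.1 x hx)).le)
    rcases List.mem_cons.1 h with rfl | hx
    · exact lt_irrefl _ hc
    · exact lt_asymm hc (hl.1 c hx)
  · obtain ⟨t, a, rfl⟩ := List.eq_nil_or_concat l |>.resolve_left hne
    rw [List.concat_eq_append] at *
    refine ⟨a, by simp, ?_⟩
    rw [List.pairwise_append] at hl
    have h3 : ∀ x ∈ t, x < a := fun x hx => hl.2.2 x hx a (by simp)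
    rw [isMax_iff_forall_not_lt]
    intro c hc
    have h := key c (by
      intro x hx
      rcases List.mem_append.1 hx with hx | hx
      · exact Or.inl ((h3 x hx).trans hc).le
      · rw [List.mem_singleton] at hx
        subst hx
        exact Or.inl hc.le)
    rcases List.mem_append.1 h with hx | hx
    · exact lt_asymm hc (h3 c hx)
    · rw [List.mem_singleton] at hx
      subst hx
      exact lt_irrefl _ hc

theorem phi_exists [Fintype P] (y : P → ℝ)
    (hy : ∀ s : Finset P, IsChain (· ≤ ·) (s : Set P) → ∑ i ∈ s, |y i| ≤ 1) :
    ∃ φ : P → ℝ, (∀ i, φ i ≤ 1) ∧ (∀ i, |y i| ≤ φ i) ∧ ∀ i j, i < j → φ i ≤ φ j - |y j| := by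
  classical
  let D : P → Finset (Finset P) := fun i => Finset.univ.filter
    (fun s => IsChain (· ≤ ·) (s : Set P) ∧ i ∈ s ∧ ∀ k ∈ s, k ≤ i)
  have hD : ∀ i s, s ∈ D i ↔ IsChain (· ≤ ·) (s : Set P) ∧ i ∈ s ∧ ∀ k ∈ s, k ≤ i := by
    intro i s
    simp [D]
  have hsing : ∀ i, {i} ∈ D i := by
    intro i
    rw [hD]
    simp
  have hex : ∀ i, ∃ s ∈ D i, ∀ t ∈ D i, ∑ k ∈ t, |y k| ≤ ∑ k ∈ s, |y k| := fun i =>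
    Finset.exists_max_image (D i) (fun s => ∑ k ∈ s, |y k|) ⟨_, hsing i⟩
  choose S hS hmax using hex
  refine ⟨fun i => ∑ k ∈ S i, |y k|, ?_, ?_, ?_⟩
  · intro i
    exact hy _ ((hD _ _).1 (hS i)).1
  · intro i
    simpa using hmax i _ (hsing i)
  · intro i j hij
    obtain ⟨h1, h2, h3⟩ := (hD _ _).1 (hS i)
    have hj : j ∉ S i := fun h => absurd (h3 j h) (not_le_of_gt hij)
    have := hmax j (insert j (S i)) (by
      rw [hD]
      refine ⟨?_, by simp, ?_⟩
      · rw [Finset.coe_insert]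
        exact h1.insert (fun b hb _ => Or.inr ((h3 b hb).trans hij.le))
      · intro k hk
        rcases Finset.mem_insert.1 hk with rfl | hk
        · exact le_rfl
        · exact (h3 k hk).trans hij.le)
    rw [Finset.sum_insert hj] at this
    linarith

theorem key_bound [Fintype P] (l : (P → ℝ) →ₗ[ℝ] ℝ) (c : ℝ)
    (hl : ∀ v ∈ enrichedChainVerts P, l v ≤ c) (y : P → ℝ)
    (hy : ∀ s : Finset P, IsChain (· ≤ ·) (s : Set P) → ∑ i ∈ s, |y i| ≤ 1) : l y ≤ c := by
  classical
  obtain ⟨φ, h1, h2, h3⟩ := phi_exists y hy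
  set w : P → ℝ := fun i => l (fun j => if i = j then 1 else 0) with hw
  have hlin : ∀ x, l x = ∑ i, x i * w i := fun x => by
    simpa using LinearMap.pi_apply_eq_sum_univ l x
  let I : P → Set ℝ := fun i => Ioc (φ i - |y i|) (φ i)
  have hI : ∀ i, I i ⊆ Ioc 0 1 := fun i => Ioc_subset_Ioc (by linarith [h2 i]) (h1 i)
  have hpt : ∀ t : ℝ, ∑ i, (I i).indicator (fun _ => |w i|) t ≤ c := by
    intro t
    have := hl (fun i => if t ∈ I i then (if 0 ≤ w i then 1 else -1) else 0) (by
      refine ⟨{i | t ∈ I i}, ?_, ?_, ?_⟩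
      · intro i hi j hj hij hle
        have hlt : i < j := lt_of_le_of_ne hle hij
        have := h3 i j hlt
        have a := hi.2
        have b := hj.1
        linarith
      · intro i hi
        have hi' : t ∈ I i := hi
        simp only [hi', if_true]
        split_ifs <;> simp
      · intro i hi
        have hi' : t ∉ I i := hi
        simp only [hi', if_false])
    rw [hlin] at this
    refine le_trans (le_of_eq ?_) this
    refine Finset.sum_congr rfl fun i _ => ?_
    by_cases hi : t ∈ I i
    · simp only [hi, indicator_of_mem, if_true]
      split_ifs with h0
      · rw [abs_of_nonneg h0, one_mul]
      · rw [abs_of_neg (not_le.1 h0)]; ring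
    · simp [hi]
  have hint : ∀ i, IntegrableOn ((I i).indicator (fun _ => |w i|)) (Ioc (0:ℝ) 1) := fun i =>
    (integrableOn_const (by simp)).indicator measurableSet_Ioc
  have hmono : ∫ t in Ioc (0:ℝ) 1, ∑ i, (I i).indicator (fun _ => |w i|) t
      ≤ ∫ t in Ioc (0:ℝ) 1, c :=
    setIntegral_mono_on (integrable_finsetSum _ fun i _ => hint i)
      (integrableOn_const (by simp)) measurableSet_Ioc (fun t _ => hpt t)
  rw [integral_finsetSum _ fun i _ => hint i] at hmono
  have hval : ∀ i, ∫ t in Ioc (0:ℝ) 1, (I i).indicator (fun _ => |w i|) t = |y i| * |w i| := by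
    intro i
    rw [setIntegral_indicator measurableSet_Ioc, inter_eq_self_of_subset_right (hI i)]
    simp [I]
  simp only [hval] at hmono
  simp at hmono
  refine le_trans ?_ hmono
  rw [hlin]
  exact Finset.sum_le_sum fun i _ => (le_abs_self _).trans (abs_mul _ _).le

/-- signed indicator of a maximal chain. -/
def SG (L : List P) (g : P → ℝ) : Prop :=
  IsMaxChainList L ∧ (∀ i ∈ L, g i = 1 ∨ g i = -1) ∧ ∀ i, i ∉ L → g i = 0

/-- functional attached to a vector. -/
noncomputable def dotL [Fintype P] (g : P → ℝ) : (P → ℝ) →L[ℝ] ℝ :=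
  ∑ i, g i • ContinuousLinearMap.proj (R := ℝ) (φ := fun _ : P => ℝ) i

theorem dotL_apply [Fintype P] (g x : P → ℝ) : dotL g x = ∑ i, g i * x i := by
  simp [dotL]

/-- the face of a vector. -/
def face [Fintype P] (g : P → ℝ) : Set (P → ℝ) :=
  {x | x ∈ convexHull ℝ (enrichedChainVerts P) ∧ dotL g x = 1}

theorem zero_vert : (0 : P → ℝ) ∈ enrichedChainVerts P :=
  ⟨∅, by simp, by simp, by simp⟩

theorem SG_le [Fintype P] {L : List P} {g : P → ℝ} (h : SG L g) {x : P → ℝ}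
    (hx : x ∈ convexHull ℝ (enrichedChainVerts P)) : dotL g x ≤ 1 := by
  have hconv : Convex ℝ {x : P → ℝ | dotL g x ≤ 1} :=
    convex_halfSpace_le (dotL g).toLinearMap.isLinear 1
  refine convexHull_min ?_ hconv hx
  rintro v ⟨A, hA, h1, h2⟩
  show dotL g v ≤ 1
  rw [dotL_apply]
  by_cases hex : ∃ i ∈ L, i ∈ A
  · obtain ⟨i, hiL, hiA⟩ := hex
    rw [Finset.sum_eq_single i]
    · rcases h.2.1 i hiL with e | e <;> rcases h1 i hiA with e' | e' <;> rw [e, e'] <;> norm_num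
    · intro j _ hji
      by_cases hjL : j ∈ L
      · have : j ∉ A := by
          intro hjA
          rcases maxl_cmp h.1 hjL hiL with hc | hc
          · exact hA hjA hiA hji hc
          · exact hA hiA hjA hji.symm hc
        rw [h2 j this, mul_zero]
      · rw [h.2.2 j hjL, zero_mul]
    · simp
  · push Not at hex
    rw [Finset.sum_eq_zero]
    · norm_num
    · intro i _
      by_cases hi : i ∈ L
      · rw [h2 i (hex i hi), mul_zero]
      · rw [h.2.2 i hi, zero_mul]

theorem SG_sq {L : List P} {g : P → ℝ} (h : SG L g) {i : P} (hi : i ∈ L) : g i * g i = 1 := by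
  rcases h.2.1 i hi with e | e <;> rw [e] <;> norm_num

open Classical in
theorem single_mem_face [Fintype P] {L : List P} {g : P → ℝ} (h : SG L g) {i : P} (hi : i ∈ L) :
    (Pi.single i (g i) : P → ℝ) ∈ face g := by
  refine ⟨subset_convexHull _ _ ⟨{i}, by simp, ?_, ?_⟩, ?_⟩
  · intro j hj
    rw [mem_singleton_iff] at hj
    subst hj
    simpa using h.2.1 j hi
  · intro j hj
    rw [mem_singleton_iff] at hj
    simp [hj]
  · rw [dotL_apply, Finset.sum_eq_single i]
    · simpa using SG_sq h hi
    · intro j _ hj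
      simp [hj]
    · simp

open Classical in
theorem pair_mem_face [Fintype P] {L : List P} {g : P → ℝ} (h : SG L g) {i j : P} (hi : i ∈ L)
    (hj : j ∉ L) (hij : ¬ i ≤ j) (hji : ¬ j ≤ i) :
    (Pi.single i (g i) + Pi.single j 1 : P → ℝ) ∈ face g := by
  have hne : i ≠ j := fun e => hij e.le
  refine ⟨subset_convexHull _ _ ⟨{i, j}, ?_, ?_, ?_⟩, ?_⟩
  · intro a ha b hb hab hle
    simp only [mem_insert_iff, mem_singleton_iff] at ha hb
    rcases ha with rfl | rfl <;> rcases hb with rfl | rfl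
    · exact hab rfl
    · exact hij hle
    · exact hji hle
    · exact hab rfl
  · intro a ha
    simp only [mem_insert_iff, mem_singleton_iff] at ha
    rcases ha with rfl | rfl
    · simpa [hne] using h.2.1 a hi
    · simp [hne.symm]
  · intro a ha
    simp only [mem_insert_iff, mem_singleton_iff, not_or] at ha
    simp [ha.1, ha.2]
  · rw [map_add, (single_mem_face h hi).2, dotL_apply, Finset.sum_eq_single j]
    · simp [h.2.2 j hj]
    · intro k _ hk
      simp [hk]
    · simp

theorem vectorSpan_le_ker [Fintype P] {F : Set (P → ℝ)} (f : (P → ℝ) →ₗ[ℝ] ℝ) (c : ℝ)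
    (h : ∀ x ∈ F, f x = c) : vectorSpan ℝ F ≤ LinearMap.ker f := by
  rw [vectorSpan_def, Submodule.span_le]
  rintro _ ⟨x, hx, y, hy, rfl⟩
  simp [h x hx, h y hy]

theorem face_span [Fintype P] {L : List P} {g : P → ℝ} (h : SG L g) :
    vectorSpan ℝ (face g) = LinearMap.ker (dotL g).toLinearMap := by
  classical
  apply le_antisymm
  · exact vectorSpan_le_ker _ 1 (fun x hx => hx.2)
  intro v hv
  have hv' : ∑ i, g i * v i = 0 := by
    rw [← dotL_apply]
    exact hv
  obtain ⟨i0, hi0⟩ := List.exists_mem_of_ne_nil L h.1.1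
  have hdec : v = ∑ i, v i • (Pi.single i 1 - g i • Pi.single i0 (g i0) : P → ℝ) := by
    simp only [smul_sub, Finset.sum_sub_distrib, smul_smul, ← Finset.sum_smul]
    have : ∑ i, v i * g i = 0 := by
      rw [← hv']
      exact Finset.sum_congr rfl fun i _ => mul_comm _ _
    rw [this, zero_smul, sub_zero]
    funext k
    simp [Finset.sum_apply, Pi.single_apply]
  rw [hdec]
  refine Submodule.sum_mem _ fun i _ => Submodule.smul_mem _ _ ?_
  by_cases hi : i ∈ L
  · have h1 := vsub_mem_vectorSpan ℝ (single_mem_face h hi) (single_mem_face h hi0)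
    have h2 := Submodule.smul_mem _ (g i) h1
    convert h2 using 1
    have e : g i • (Pi.single i (g i) : P → ℝ) = Pi.single i 1 := by
      rw [← Pi.single_smul, smul_eq_mul, SG_sq h hi]
    rw [vsub_eq_sub, smul_sub, e]
  · obtain ⟨k, hk, hki, hik⟩ := maxl_max h.1 hi
    have h1 := vsub_mem_vectorSpan ℝ (pair_mem_face h hk hi hki hik) (single_mem_face h hk)
    rw [h.2.2 i hi, zero_smul, sub_zero]
    simpa using h1

theorem SG_ne_zero [Fintype P] {L : List P} {g : P → ℝ} (h : SG L g) :
    (dotL g).toLinearMap ≠ 0 := by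
  classical
  intro h0
  obtain ⟨i0, hi0⟩ := List.exists_mem_of_ne_nil L h.1.1
  have h1 := (single_mem_face h hi0).2
  have h2 := LinearMap.congr_fun h0 (Pi.single i0 (g i0))
  have h3 : dotL g (Pi.single i0 (g i0)) = 0 := h2
  rw [h1] at h3
  exact one_ne_zero h3

theorem face_facet [Fintype P] {L : List P} {g : P → ℝ} (h : SG L g) :
    IsFacetOf P (convexHull ℝ (enrichedChainVerts P)) (face g) := by
  classical
  obtain ⟨i0, hi0⟩ := List.exists_mem_of_ne_nil L h.1.1
  have hm := single_mem_face h hi0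
  refine ⟨⟨_, hm⟩, ?_, ?_, ?_⟩
  · intro _
    refine ⟨dotL g, ?_⟩
    ext x
    constructor
    · rintro ⟨h1, h2⟩
      exact ⟨h1, fun y hy => by rw [h2]; exact SG_le h hy⟩
    · rintro ⟨h1, h2⟩
      refine ⟨h1, le_antisymm (SG_le h h1) ?_⟩
      rw [← hm.2]
      exact h2 _ hm.1
  · intro he
    have : (0 : P → ℝ) ∈ face g := by
      rw [he]
      exact subset_convexHull _ _ zero_vert
    have h2 := this.2
    simp at h2
  · rw [face_span h]
    have := Module.Dual.finrank_ker_add_one_of_ne_zero (SG_ne_zero h)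
    rw [Module.finrank_fintype_fun_eq_card] at this
    omega

theorem face_inj [Fintype P] {L L' : List P} {g g' : P → ℝ} (h : SG L g) (h' : SG L' g')
    (he : face g = face g') : g = g' := by
  classical
  have aux : ∀ {L L' : List P} {g g' : P → ℝ}, SG L g → SG L' g' → face g = face g' →
      ∀ i ∈ L, g i = g' i := by
    intro L L' g g' h h' he i hi
    have h1 := single_mem_face h hi
    rw [he] at h1
    have h2 := h1.2
    rw [dotL_apply, Finset.sum_eq_single i] at h2
    · simp only [Pi.single_eq_same] at h2
      have h3 := SG_sq h hi
      have h4 : (g' i - g i) * g i = 0 := by linarith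
      rcases mul_eq_zero.1 h4 with h5 | h5
      · linarith
      · rw [h5] at h3
        norm_num at h3
    · intro j _ hj
      simp [hj]
    · simp
  funext i
  by_cases hi : i ∈ L
  · exact aux h h' he i hi
  · by_cases hi' : i ∈ L'
    · exact (aux h' h he.symm i hi').symm
    · rw [h.2.2 i hi, h'.2.2 i hi']

theorem chain_bound [Fintype P] [Nonempty P] {y : P → ℝ}
    (hy : ∀ g : P → ℝ, (∃ L, SG L g) → dotL g y ≤ 1) (s : Finset P)
    (hs : IsChain (· ≤ ·) (s : Set P)) : ∑ i ∈ s, |y i| ≤ 1 := by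
  classical
  obtain ⟨L, hL, hsL⟩ := exists_maxl s hs
  have := hy (fun i => if i ∈ L then (if 0 ≤ y i then 1 else -1) else 0) ⟨L, hL, by
    intro i hi
    simp only [hi, if_true]
    split_ifs <;> simp, by
    intro i hi
    simp [hi]⟩
  rw [dotL_apply] at this
  refine le_trans ?_ this
  have e : ∀ i, (if i ∈ L then (if 0 ≤ y i then (1:ℝ) else -1) else 0) * y i
      = if i ∈ L then |y i| else 0 := by
    intro i
    by_cases hi : i ∈ L
    · simp only [hi, if_true]
      split_ifs with h0
      · rw [abs_of_nonneg h0, one_mul]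
      · rw [abs_of_neg (not_le.1 h0)]; ring
    · simp [hi]
  simp only [e]
  rw [← Finset.sum_filter]
  refine Finset.sum_le_sum_of_subset_of_nonneg ?_ (fun i _ _ => abs_nonneg _)
  intro i hi
  simpa using hsL i hi

theorem finite_SG [Fintype P] : {g : P → ℝ | ∃ L, SG L g}.Finite := by
  refine (Set.Finite.pi' (fun _ : P => (Set.toFinite ({0, 1, -1} : Set ℝ)))).subset ?_
  rintro g ⟨L, h⟩ i
  by_cases hi : i ∈ L
  · rcases h.2.1 i hi with e | e <;> simp [e]
  · simp [h.2.2 i hi]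

theorem facet_is_face [Fintype P] [Nonempty P] {F : Set (P → ℝ)}
    (hF : IsFacetOf P (convexHull ℝ (enrichedChainVerts P)) F) :
    ∃ g L, SG L g ∧ face g = F := by
  classical
  obtain ⟨hne, hexp, hFS, hdim⟩ := hF
  have hconv : Convex ℝ F := hexp.convex (convex_convexHull ℝ _)
  obtain ⟨l, hl⟩ := hexp hne
  have hFsub : ∀ x ∈ F, x ∈ convexHull ℝ (enrichedChainVerts P) := by
    intro x hx
    rw [hl] at hx
    exact hx.1
  obtain ⟨x0, hx0⟩ := hne
  have hmax : ∀ y ∈ convexHull ℝ (enrichedChainVerts P), l y ≤ l x0 := by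
    rw [hl] at hx0
    exact hx0.2
  have hconst : ∀ x ∈ F, l x = l x0 := by
    intro x hx
    refine le_antisymm (hmax x (hFsub x hx)) ?_
    rw [hl] at hx
    exact hx.2 x0 (hFsub x0 hx0)
  have hl0 : ∃ v, 0 < l v := by
    by_contra hcon
    push Not at hcon
    have hz : ∀ v, l v = 0 := by
      intro v
      have h1 := hcon v
      have h2 := hcon (-v)
      rw [map_neg] at h2
      linarith
    apply hFS
    rw [hl]
    ext x
    simp [hz]
  obtain ⟨v, hv⟩ := hl0
  -- a chain facet containing F
  have hsub : ∃ g, (∃ L, SG L g) ∧ ∀ x ∈ F, dotL g x = 1 := by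
    by_contra hcon
    push Not at hcon
    have hstep : ∀ T : Finset (P → ℝ), (∀ g ∈ T, ∃ L, SG L g) →
        ∃ y ∈ F, ∀ g ∈ T, dotL g y < 1 := by
      intro T
      induction T using Finset.induction_on with
      | empty => exact fun _ => ⟨x0, hx0, by simp⟩
      | insert g T _ ih =>
        intro hT
        obtain ⟨y, hy, hyT⟩ := ih (fun g' hg' => hT g' (Finset.mem_insert_of_mem hg'))
        obtain ⟨z, hz, hzg⟩ := hcon g (hT g (Finset.mem_insert_self _ _))
        refine ⟨(1/2 : ℝ) • y + (1/2 : ℝ) • z,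
          hconv hy hz (by norm_num) (by norm_num) (by norm_num), ?_⟩
        intro g' hg'
        obtain ⟨L', hL'⟩ := hT g' hg'
        have a := SG_le hL' (hFsub y hy)
        have b := SG_le hL' (hFsub z hz)
        rw [map_add, map_smul, map_smul, smul_eq_mul, smul_eq_mul]
        rcases Finset.mem_insert.1 hg' with rfl | hg'
        · have := lt_of_le_of_ne b hzg
          linarith
        · have := hyT g' hg'
          linarith
    obtain ⟨y, hyF, hy⟩ := hstep finite_SG.toFinset (by simp)
    have hev : ∀ᶠ δ : ℝ in nhdsWithin 0 (Ioi 0), ∀ g ∈ (finite_SG (P := P)).toFinset,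
        dotL g (y + δ • v) < 1 := by
      rw [Filter.eventually_all_finset]
      intro g hg
      apply nhdsWithin_le_nhds
      have hc : Continuous (fun δ : ℝ => dotL g (y + δ • v)) := by fun_prop
      refine hc.continuousAt.eventually_lt continuousAt_const ?_
      simpa using hy g hg
    obtain ⟨δ, hδ, hδ0⟩ := (hev.and self_mem_nhdsWithin).exists
    have hb := key_bound l.toLinearMap (l x0) (fun u hu => hmax u (subset_convexHull _ _ hu))
      (y + δ • v) (chain_bound (fun g hg => (hδ g (by simpa using hg)).le))
    have hb' : l (y + δ • v) ≤ l x0 := hb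
    rw [map_add, map_smul, hconst y hyF, smul_eq_mul] at hb'
    have : 0 < δ * l v := mul_pos hδ0 hv
    linarith
  obtain ⟨g, ⟨L, hg⟩, hgF⟩ := hsub
  refine ⟨g, L, hg, ?_⟩
  have hlne : l.toLinearMap ≠ 0 := by
    intro h0
    have : l v = 0 := LinearMap.congr_fun h0 v
    linarith
  have hk : vectorSpan ℝ F = LinearMap.ker l.toLinearMap := by
    apply Submodule.eq_of_le_of_finrank_eq (vectorSpan_le_ker _ (l x0) hconst)
    have := Module.Dual.finrank_ker_add_one_of_ne_zero hlne
    rw [Module.finrank_fintype_fun_eq_card] at this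
    omega
  have hkg : LinearMap.ker l.toLinearMap ≤ LinearMap.ker (dotL g).toLinearMap := by
    rw [← hk]
    exact vectorSpan_le_ker _ 1 hgF
  have hprop : ∀ x, l v * dotL g x = l x * dotL g v := by
    intro x
    have h1 : l v • x - l x • v ∈ LinearMap.ker l.toLinearMap := by
      rw [LinearMap.mem_ker]
      show l (l v • x - l x • v) = 0
      simp [mul_comm]
    have h2 : dotL g (l v • x - l x • v) = 0 := hkg h1
    simp only [map_sub, map_smul, smul_eq_mul] at h2
    linarith
  have h0 := hprop x0
  rw [hgF x0 hx0] at h0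
  have hgv : dotL g v ≠ 0 := by
    intro e
    rw [e] at h0
    linarith
  apply Subset.antisymm
  · rintro x ⟨hx, hx1⟩
    have h1 := hprop x
    rw [hx1, h0] at h1
    have h2 : l x0 = l x := mul_right_cancel₀ hgv h1
    rw [hl]
    exact ⟨hx, fun y hy => h2 ▸ hmax y hy⟩
  · intro x hx
    exact ⟨hFsub x hx, hgF x hx⟩

/-- index type. -/
abbrev T (P : Type*) [PartialOrder P] [Fintype P] :=
  Σ ℓ : Fin (Fintype.card P), Σ L : {l : List P // IsMaxChainList l ∧ l.length = ℓ + 1},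
    ({i // i ∈ L.1} → Bool)

open Classical in
/-- vector of an index. -/
noncomputable def vec [Fintype P] (t : T P) : P → ℝ := fun i =>
  if h : i ∈ t.2.1.1 then (if t.2.2 ⟨i, h⟩ then 1 else -1) else 0

theorem vec_SG [Fintype P] (t : T P) : SG t.2.1.1 (vec t) := by
  refine ⟨t.2.1.2.1, ?_, ?_⟩
  · intro i hi
    simp only [vec, hi, dif_pos]
    split_ifs <;> simp
  · intro i hi
    simp [vec, hi]

theorem SG_mem {L : List P} {g : P → ℝ} (h : SG L g) (i : P) : i ∈ L ↔ g i ≠ 0 := by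
  constructor
  · intro hi e
    have := SG_sq h hi
    rw [e] at this
    norm_num at this
  · intro hi
    by_contra hc
    exact hi (h.2.2 i hc)

theorem SG_list {L L' : List P} {g : P → ℝ} (h : SG L g) (h' : SG L' g) : L = L' :=
  (maxl_pairwise h.1).eq_of_mem_iff (maxl_pairwise h'.1)
    (fun i => (SG_mem h i).trans (SG_mem h' i).symm)

theorem vec_inj [Fintype P] : Function.Injective (vec (P := P)) := by
  intro t t' he
  have hL : t.2.1.1 = t'.2.1.1 := SG_list (vec_SG t) (he ▸ vec_SG t')
  obtain ⟨⟨ℓ, hℓ⟩, ⟨L, h1, h2⟩, ε⟩ := t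
  obtain ⟨⟨ℓ', hℓ'⟩, ⟨L', h1', h2'⟩, ε'⟩ := t'
  simp only at hL h2 h2'
  subst hL
  have : ℓ = ℓ' := by omega
  subst this
  have : ε = ε' := by
    funext ⟨i, hi⟩
    have h3 := congrFun he i
    simp only [vec] at h3
    have hi' : i ∈ L := hi
    rw [dif_pos hi', dif_pos hi'] at h3
    cases e : ε ⟨i, hi⟩ <;> cases e' : ε' ⟨i, hi⟩ <;> simp [e, e'] at h3 ⊢ <;> norm_num at h3
  subst this
  rfl

theorem vec_surj [Fintype P] {L : List P} {g : P → ℝ} (h : SG L g) : ∃ t : T P, vec t = g := by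
  classical
  have hlen : L.length ≤ Fintype.card P := (maxl_nodup h.1).length_le_card
  have hpos : 0 < L.length := List.length_pos_iff.2 h.1.1
  refine ⟨⟨⟨L.length - 1, by omega⟩, ⟨L, h.1, by simp only; omega⟩,
    fun i => decide (g i.1 = 1)⟩, ?_⟩
  funext i
  by_cases hi : i ∈ L
  · rcases h.2.1 i hi with e | e
    · simp [vec, hi, e]
    · simp [vec, hi, e]
      norm_num
  · simp [vec, hi, h.2.2 i hi]

instance finite_maxl [Fintype P] (m : ℕ) :
    Finite {l : List P // IsMaxChainList l ∧ l.length = m} := by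
  classical
  refine Finite.of_injective
    (fun l => (⟨l.1, maxl_nodup l.2.1⟩ : {l : List P // l.Nodup})) ?_
  intro a b h
  simpa [Subtype.ext_iff] using h

theorem card_T [Fintype P] : Nat.card (T P) = ∑ ℓ ∈ Finset.range (Fintype.card P),
          2 ^ (ℓ + 1) * Nat.card {l : List P // IsMaxChainList l ∧ l.length = ℓ + 1} := by
  classical
  have hfin : ∀ L : List P, Finite {i // i ∈ L} := fun L => inferInstance
  rw [Nat.card_sigma, Finset.sum_range]
  refine Finset.sum_congr rfl fun ℓ _ => ?_
  letI := Fintype.ofFinite {l : List P // IsMaxChainList l ∧ l.length = ℓ + 1}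
  rw [Nat.card_sigma]
  have : ∀ L : {l : List P // IsMaxChainList l ∧ l.length = (ℓ : ℕ) + 1},
      Nat.card ({i // i ∈ L.1} → Bool) = 2 ^ ((ℓ : ℕ) + 1) := by
    intro L
    rw [Nat.card_fun]
    have hc : Nat.card {i // i ∈ L.1} = (ℓ : ℕ) + 1 := by
      refine Eq.trans ?_ L.2.2
      rw [← List.toFinset_card_of_nodup (maxl_nodup L.2.1), ← Nat.card_eq_finsetCard]
      exact Nat.card_congr (Equiv.subtypeEquivRight (fun i => by simp))
    rw [hc]
    simp
  simp only [this]
  simp [mul_comm, Nat.card_eq_fintype_card]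

end ECP

/-- The number of facets of `C^(e)_P` is `Σ_{ℓ=0}^{n-1} 2^{ℓ+1} mc_ℓ(P)`, where
`mc_ℓ(P)` is the number of maximal chains of length `ℓ` (with `ℓ+1` elements). -/
theorem stmt13 (P : Type*) [Fintype P] [PartialOrder P] [Nonempty P] :
    Set.ncard {F : Set (P → ℝ) | IsFacetOf P (convexHull ℝ (enrichedChainVerts P)) F}
      = ∑ ℓ ∈ Finset.range (Fintype.card P),
          2 ^ (ℓ + 1) * Nat.card {l : List P // IsMaxChainList l ∧ l.length = ℓ + 1} := by
  have hset : {F : Set (P → ℝ) | IsFacetOf P (convexHull ℝ (enrichedChainVerts P)) F}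
      = (fun t : ECP.T P => ECP.face (ECP.vec t)) '' Set.univ := by
    ext F
    constructor
    · intro hF
      obtain ⟨g, L, hg, rfl⟩ := ECP.facet_is_face hF
      obtain ⟨t, rfl⟩ := ECP.vec_surj hg
      exact ⟨t, trivial, rfl⟩
    · rintro ⟨t, -, rfl⟩
      exact ECP.face_facet (ECP.vec_SG t)
  rw [hset, Set.ncard_image_of_injective, Set.ncard_univ, ECP.card_T]
  intro t t' h
  exact ECP.vec_inj (ECP.face_inj (ECP.vec_SG t) (ECP.vec_SG t') h)
end

section
/- Let P be a finite poset. Then sc(P) + mc(P) ≤ Σ_{ℓ≥0} 2^{ℓ+1} mc_ℓ(P), where sc(P) is the number of saturated chains of P ending at a maximal element, mc(P) is the number of maximal chains, and mc_ℓ(P) is the number of maximal chains of length ℓ. Consequently the enriched order polytope has at most as many facets as the enriched chain polytope. -/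
section Enr
variable {P : Type*} [PartialOrder P]

lemma enr_sat_single {a : P} : IsSatChainToMax [a] ↔ IsMax a := by
  simp [IsSatChainToMax, List.Chain']

lemma enr_sat_cons {a b : P} {l : List P} :
    IsSatChainToMax (a :: b :: l) ↔ a ⋖ b ∧ IsSatChainToMax (b :: l) := by
  simp [IsSatChainToMax, List.Chain', List.isChain_cons_cons, and_assoc]

lemma enr_max_iff {l : List P} :
    IsMaxChainList l ↔ IsSatChainToMax l ∧ ∃ a, l.head? = some a ∧ IsMin a := by
  simp only [IsSatChainToMax, IsMaxChainList]; tauto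

lemma enr_max_cons {a : P} {l : List P} :
    IsMaxChainList (a :: l) ↔ IsSatChainToMax (a :: l) ∧ IsMin a := by
  rw [enr_max_iff]; simp

lemma enr_sat_pw {l : List P} (h : IsSatChainToMax l) : l.Pairwise (· < ·) := by
  have h2 : l.IsChain (· ⋖ ·) := h.2.1
  have h3 : l.IsChain (· < ·) := h2.imp (fun _ _ hab => hab.lt)
  exact h3.pairwise

lemma enr_sat_nodup {l : List P} (h : IsSatChainToMax l) : l.Nodup :=
  (enr_sat_pw h).imp (fun hab => hab.ne)

lemma enr_sat_finite [Fintype P] : {l : List P | IsSatChainToMax l}.Finite := by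
  refine Set.Finite.subset (s := {l : List P | l.Nodup}) ?_ (fun l h => enr_sat_nodup h)
  exact Set.finite_coe_iff.1 (inferInstanceAs (Finite {l : List P // l.Nodup}))

lemma enr_max_finite [Fintype P] : {l : List P | IsMaxChainList l}.Finite :=
  enr_sat_finite.subset (fun _ h => (enr_max_iff.1 h).1)

lemma enr_exists_sat [Finite P] (a : P) : ∃ l, IsSatChainToMax (a :: l) := by
  induction a using WellFoundedGT.induction with
  | ind a ih =>
    by_cases h : IsMax a
    · exact ⟨[], enr_sat_single.2 h⟩
    · obtain ⟨b, hb⟩ := not_isMax_iff.1 h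
      obtain ⟨c, hc, -⟩ := exists_covBy_le_of_lt hb
      obtain ⟨l, hl⟩ := ih c hc.lt
      exact ⟨c :: l, enr_sat_cons.2 ⟨hc, hl⟩⟩

lemma enr_extend [Finite P] (a : P) : ∀ l, IsSatChainToMax (a :: l) →
    ∃ m, IsMaxChainList (m ++ a :: l) := by
  induction a using WellFoundedLT.induction with
  | ind a ih =>
    intro l hl
    by_cases h : IsMin a
    · exact ⟨[], enr_max_cons.2 ⟨hl, h⟩⟩
    · obtain ⟨b, hb⟩ := not_isMin_iff.1 h
      obtain ⟨c, -, hc⟩ := exists_le_covBy_of_lt hb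
      obtain ⟨m, hm⟩ := ih c hc.lt (a :: l) (enr_sat_cons.2 ⟨hc, hl⟩)
      exact ⟨m ++ [c], by simpa using hm⟩

/-- the finset of maximal chains -/
noncomputable def enrMC (P : Type*) [Fintype P] [PartialOrder P] : Finset (List P) :=
  (enr_max_finite (P := P)).toFinset

lemma enr_mem_MC [Fintype P] {l : List P} : l ∈ enrMC P ↔ IsMaxChainList l := by
  simp [enrMC]

lemma enr_card_max [Fintype P] :
    Nat.card {l : List P // IsMaxChainList l} = (enrMC P).card := by
  rw [← Nat.card_eq_finsetCard]
  exact Nat.card_congr (Equiv.subtypeEquivRight (fun l => enr_mem_MC.symm))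

lemma enr_card_sat [Fintype P] :
    Nat.card {l : List P // IsSatChainToMax l} ≤ ∑ m ∈ enrMC P, m.length := by
  classical
  have : Nat.card {l : List P // IsSatChainToMax l}
      = (enr_sat_finite (P := P)).toFinset.card := by
    rw [← Nat.card_eq_finsetCard]
    exact Nat.card_congr (Equiv.subtypeEquivRight (fun l => by simp))
  rw [this]
  have hsub : (enr_sat_finite (P := P)).toFinset ⊆
      (enrMC P).biUnion (fun m => (Finset.range m.length).image (fun k => m.drop k)) := by
    intro l hl
    have hl : IsSatChainToMax l := by simpa using hl
    cases l with
    | nil => exact absurd rfl hl.1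
    | cons a l =>
      obtain ⟨m, hm⟩ := enr_extend a l hl
      simp only [Finset.mem_biUnion, Finset.mem_image, Finset.mem_range]
      exact ⟨_, enr_mem_MC.2 hm, m.length, by simp, by simp⟩
  refine (Finset.card_le_card hsub).trans (Finset.card_biUnion_le.trans ?_)
  refine Finset.sum_le_sum fun m _ => ?_
  exact Finset.card_image_le.trans (by simp)

lemma enr_rhs [Fintype P] :
    ∑ ℓ ∈ Finset.range (Fintype.card P),
      2 ^ (ℓ + 1) * Nat.card {l : List P // IsMaxChainList l ∧ l.length = ℓ + 1}
    = ∑ m ∈ enrMC P, 2 ^ m.length := by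
  classical
  have hpos : ∀ m ∈ enrMC P, 0 < m.length := fun m hm =>
    List.length_pos_iff.2 (enr_mem_MC.1 hm).1
  rw [← Finset.sum_fiberwise_of_maps_to (s := enrMC P) (t := Finset.range (Fintype.card P))
    (g := fun m => m.length - 1)]
  · refine Finset.sum_congr rfl fun ℓ _ => ?_
    have : Nat.card {l : List P // IsMaxChainList l ∧ l.length = ℓ + 1}
        = ((enrMC P).filter (fun m => m.length - 1 = ℓ)).card := by
      rw [← Nat.card_eq_finsetCard]
      refine Nat.card_congr (Equiv.subtypeEquivRight (fun l => ?_))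
      rw [Finset.mem_filter, enr_mem_MC]
      constructor
      · rintro ⟨h1, h2⟩; exact ⟨h1, by omega⟩
      · rintro ⟨h1, h2⟩
        have := hpos l (enr_mem_MC.2 h1)
        exact ⟨h1, by omega⟩
    rw [this, mul_comm, ← smul_eq_mul, ← Finset.sum_const]
    refine Finset.sum_congr rfl fun m hm => ?_
    rw [Finset.mem_filter] at hm
    have := hpos m hm.1
    congr 1; omega
  · intro m hm
    have h1 := hpos m hm
    have h2 := (enr_sat_nodup (enr_max_iff.1 (enr_mem_MC.1 hm)).1).length_le_card
    rw [Finset.mem_range]; omega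

lemma enr_part1 [Fintype P] :
    Nat.card {l : List P // IsSatChainToMax l} + Nat.card {l : List P // IsMaxChainList l}
      ≤ ∑ ℓ ∈ Finset.range (Fintype.card P),
          2 ^ (ℓ + 1) * Nat.card {l : List P // IsMaxChainList l ∧ l.length = ℓ + 1} := by
  rw [enr_rhs, enr_card_max]
  refine (Nat.add_le_add_right enr_card_sat _).trans ?_
  rw [Finset.card_eq_sum_ones, ← Finset.sum_add_distrib]
  exact Finset.sum_le_sum fun m _ => Nat.lt_two_pow_self

/-- the halved values along a chain: linear part -/
noncomputable def enrL : List P → ((P → ℝ) →ₗ[ℝ] ℝ)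
  | [] => 0
  | b :: l => (1 / 2 : ℝ) • (LinearMap.proj b + enrL l)

/-- constant part -/
noncomputable def enrC : List P → ℝ
  | [] => 1
  | _ :: l => enrC l / 2

/-- affine value -/
noncomputable def enrV (x : P → ℝ) : List P → ℝ
  | [] => 1
  | b :: l => (x b + enrV x l) / 2

lemma enr_V_eq (x : P → ℝ) (l : List P) : enrV x l = enrL l x + enrC l := by
  induction l with
  | nil => simp [enrV, enrL, enrC]
  | cons b l ih => simp [enrV, enrL, enrC, ih]; ring

lemma enr_V_one {x : P → ℝ} {l : List P} (h : ∀ b ∈ l, x b = 1) : enrV x l = 1 := by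
  induction l with
  | nil => rfl
  | cons b l ih =>
    simp only [List.mem_cons, forall_eq_or_imp] at h
    simp [enrV, ih h.2, h.1]

lemma enr_L_single [DecidableEq P] {a : P} {l : List P} (h : a ∉ l) :
    enrL l (Pi.single a 1) = 0 := by
  induction l with
  | nil => rfl
  | cons b l ih =>
    simp only [List.mem_cons, not_or] at h
    simp [enrL, ih h.2, Pi.single_apply, Ne.symm h.1]

lemma enr_vert_above {x : P → ℝ} {F : Set P} (hF : IsUpperSet F)
    (h2 : ∀ i ∈ F, i ∉ minSet F → x i = 1) {a b : P} (ha : a ∈ F) (hab : a < b) : x b = 1 :=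
  h2 b (hF hab.le ha) (fun hb => hab.ne (hb.2 a ha hab.le))

lemma enr_vert_bound {x : P → ℝ} (hx : x ∈ enrichedOrderVerts P) {a : P} {l : List P}
    (hl : (a :: l).Pairwise (· < ·)) : |x a| ≤ enrV x l := by
  obtain ⟨F, hF, h1, h2, h3⟩ := hx
  have habs : ∀ i, |x i| ≤ 1 := by
    intro i
    by_cases hi : i ∈ F
    · by_cases hm : i ∈ minSet F
      · rcases h1 i hm with h | h <;> simp [h]
      · simp [h2 i hi hm]
    · simp [h3 i hi]
  induction l generalizing a with
  | nil => exact habs a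
  | cons b l ih =>
    have hl' := List.pairwise_cons.1 hl
    by_cases ha : a ∈ F
    · rw [enr_V_one (fun c hc => enr_vert_above hF h2 ha (hl'.1 c hc))]
      exact habs a
    · rw [h3 a ha, abs_zero]
      have := ih hl'.2
      have := neg_abs_le (x b)
      simp only [enrV]; linarith

/-- inequalities index set and functional -/
noncomputable def enrA (s : ℝ) (l : List P) : (P → ℝ) →ₗ[ℝ] ℝ :=
  match l with
  | [] => 0
  | a :: l => s • LinearMap.proj a - enrL l

end Enr
section Enr2
variable {P : Type*} [PartialOrder P] [Fintype P]
open MeasureTheory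

lemma enr_int_step {c : ℝ} (h0 : 0 ≤ c) (h1 : c ≤ 1) :
    ∫ t in Set.Ioc (0 : ℝ) 1, (Set.Iic c).indicator (fun _ => (1 : ℝ)) t = c := by
  rw [integral_indicator measurableSet_Iic, Measure.restrict_restrict measurableSet_Iic]
  have : Set.Iic c ∩ Set.Ioc 0 1 = Set.Ioc 0 c := by
    ext t; simp only [Set.mem_inter_iff, Set.mem_Iic, Set.mem_Ioc]
    constructor
    · rintro ⟨a, b, -⟩; exact ⟨b, a⟩
    · rintro ⟨a, b⟩; exact ⟨b, a, b.trans h1⟩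
  rw [this]; simp [h0]

lemma enr_order_verts_finite : (enrichedOrderVerts P).Finite := by
  refine Set.Finite.subset (Set.Finite.pi' (t := fun _ : P => ({1, -1, 0} : Set ℝ))
    (fun _ => Set.toFinite _)) ?_
  rintro x ⟨F, hF, h1, h2, h3⟩ i
  by_cases hi : i ∈ F
  · by_cases hm : i ∈ minSet F
    · rcases h1 i hm with h | h <;> simp [h]
    · simp [h2 i hi hm]
  · simp [h3 i hi]

lemma enr_chain_verts_finite : (enrichedChainVerts P).Finite := by
  refine Set.Finite.subset (Set.Finite.pi' (t := fun _ : P => ({1, -1, 0} : Set ℝ))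
    (fun _ => Set.toFinite _)) ?_
  rintro x ⟨F, hF, h1, h3⟩ i
  by_cases hi : i ∈ F
  · rcases h1 i hi with h | h <;> simp [h]
  · simp [h3 i hi]

lemma enr_mem_of_y {x y u : P → ℝ} (hx : ∀ i, x i = 2 * y i - u i)
    (hy0 : ∀ i, 0 ≤ y i) (hyu : ∀ i, y i ≤ u i) (hu1 : ∀ i, u i ≤ 1)
    (huy : ∀ i j, i < j → u i ≤ y j) : x ∈ convexHull ℝ (enrichedOrderVerts P) := by
  set φ : ℝ → P → ℝ := fun t i =>
    2 * (Set.Iic (y i)).indicator (fun _ => (1 : ℝ)) t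
      - (Set.Iic (u i)).indicator (fun _ => (1 : ℝ)) t with hφ
  set μ : Measure ℝ := volume.restrict (Set.Ioc (0 : ℝ) 1) with hμ
  haveI : IsProbabilityMeasure μ := ⟨by simp [hμ]⟩
  have hint1 : ∀ c : ℝ, Integrable ((Set.Iic c).indicator (fun _ => (1 : ℝ))) μ := fun c =>
    (integrable_const (1 : ℝ)).indicator measurableSet_Iic
  have hint : ∀ i, Integrable (fun t => φ t i) μ := fun i =>
    ((hint1 (y i)).const_mul 2).sub (hint1 (u i))
  have hxe : x = ∫ t, φ t ∂μ := by
    funext i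
    rw [eval_integral hint]
    simp only [hφ]
    rw [integral_sub ((hint1 (y i)).const_mul 2) (hint1 (u i)), integral_const_mul,
      enr_int_step (hy0 i) ((hyu i).trans (hu1 i)),
      enr_int_step ((hy0 i).trans (hyu i)) (hu1 i), hx]
  rw [hxe]
  refine (convex_convexHull ℝ _).integral_mem
    (enr_order_verts_finite.isCompact_convexHull ℝ).isClosed ?_ (Integrable.of_eval hint)
  refine Filter.Eventually.of_forall fun t => subset_convexHull ℝ _ ?_
  refine ⟨{i | t ≤ u i}, ?_, ?_, ?_, ?_⟩
  · intro i j hij hi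
    rcases hij.eq_or_lt with rfl | h
    · exact hi
    · exact le_trans hi ((huy i j h).trans (hyu j))
  · intro i hi
    have hi' : t ≤ u i := hi.1
    by_cases h : t ≤ y i
    · left; simp [hφ, h, hi']; norm_num
    · right; simp [hφ, h, hi']
  · intro i hi hm
    have hi' : t ≤ u i := hi
    have : ∃ b, t ≤ u b ∧ b < i := by
      by_contra hcon
      push Not at hcon
      refine hm ⟨hi, fun b hb hbi => ?_⟩
      by_contra hne
      exact hcon b hb (lt_of_le_of_ne hbi hne)
    obtain ⟨b, hb, hbi⟩ := this
    have h : t ≤ y i := hb.trans (huy b i hbi)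
    simp [hφ, h, hi']; norm_num
  · intro i hi
    have hi' : ¬ t ≤ u i := hi
    have h : ¬ t ≤ y i := fun h => hi' (h.trans (hyu i))
    simp [hφ, h, hi']

lemma enr_exists_u (x : P → ℝ) : ∃ u : P → ℝ,
    (∀ i l, IsSatChainToMax (i :: l) → u i ≤ enrV x l) ∧
    (∀ i, ∃ l, IsSatChainToMax (i :: l) ∧ u i = enrV x l) := by
  have : ∀ i, ∃ l, IsSatChainToMax (i :: l) ∧
      ∀ l', IsSatChainToMax (i :: l') → enrV x l ≤ enrV x l' := by
    intro i
    have hfin : {l : List P | IsSatChainToMax (i :: l)}.Finite :=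
      enr_sat_finite.preimage (f := fun l => i :: l)
        (fun a _ b _ h => by simpa using h)
    obtain ⟨l, hl, hmin⟩ := Set.exists_min_image _ (enrV x) hfin (enr_exists_sat i)
    exact ⟨l, hl, hmin⟩
  choose f hf1 hf2 using this
  exact ⟨fun i => enrV x (f i), hf2, fun i => ⟨f i, hf1 i, rfl⟩⟩

lemma enr_mem_of_ineq {x : P → ℝ}
    (h1 : ∀ i l, IsSatChainToMax (i :: l) → x i ≤ enrV x l)
    (h2 : ∀ i l, IsMaxChainList (i :: l) → - x i ≤ enrV x l) :
    x ∈ convexHull ℝ (enrichedOrderVerts P) := by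
  obtain ⟨u, hu1, hu2⟩ := enr_exists_u x
  have hxu : ∀ i, x i ≤ u i := by
    intro i
    obtain ⟨l, hl, he⟩ := hu2 i
    rw [he]; exact h1 i l hl
  have hcov : ∀ i j, i ⋖ j → u i ≤ (x j + u j) / 2 := by
    intro i j hij
    obtain ⟨l, hl, he⟩ := hu2 j
    have := hu1 i (j :: l) (enr_sat_cons.2 ⟨hij, hl⟩)
    rw [he]; exact this
  have hy : ∀ j i, i < j → u i ≤ (x j + u j) / 2 := by
    intro j i hij
    induction i using WellFoundedGT.induction with
    | ind i ih =>
      obtain ⟨c, hc, hcj⟩ := exists_covBy_le_of_lt hij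
      rcases hcj.eq_or_lt with rfl | h
      · exact hcov _ _ hc
      · have := ih c hc.lt h
        have := hcov i c hc
        have := hxu c
        linarith
  refine enr_mem_of_y (y := fun i => (x i + u i) / 2) (u := u) ?_ ?_ ?_ ?_ ?_
  · intro i; ring
  · intro i
    by_cases hi : IsMin i
    · obtain ⟨l, hl, he⟩ := hu2 i
      have := h2 i l (enr_max_cons.2 ⟨hl, hi⟩)
      show 0 ≤ (x i + u i) / 2
      rw [he]; linarith
    · induction i using WellFoundedLT.induction with
      | ind i ih =>
        obtain ⟨b, hb⟩ := not_isMin_iff.1 hi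
        have h3 := hy i b hb
        have h4 := hxu b
        have h5 : 0 ≤ (x b + u b) / 2 := by
          by_cases hbm : IsMin b
          · obtain ⟨l, hl, he⟩ := hu2 b
            have := h2 b l (enr_max_cons.2 ⟨hl, hbm⟩)
            rw [he]; linarith
          · exact ih b hb hbm
        show 0 ≤ (x i + u i) / 2
        linarith
  · intro i; have := hxu i
    show (x i + u i) / 2 ≤ u i
    linarith
  · intro i
    induction i using WellFoundedGT.induction with
    | ind i ih =>
      obtain ⟨l, hl, he⟩ := hu2 i
      cases l with
      | nil => rw [he]; exact le_rfl
      | cons b l =>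
        have hc := (enr_sat_cons.1 hl).1
        have := ih b hc.lt
        have := hcov i b hc
        have := hxu b
        linarith
  · intro i j hij; exact hy j i hij

/-- index type of inequalities for the order polytope -/
abbrev EnrIdx (P : Type*) [PartialOrder P] : Type _ :=
  {l : List P // IsSatChainToMax l} ⊕ {l : List P // IsMaxChainList l}

/-- linear forms -/
noncomputable def enrForm : EnrIdx P → ((P → ℝ) →ₗ[ℝ] ℝ)
  | .inl l => enrA 1 l.1
  | .inr l => enrA (-1) l.1

/-- right hand sides -/
noncomputable def enrRhs : EnrIdx P → ℝ
  | .inl l => enrC l.1.tail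
  | .inr l => enrC l.1.tail

lemma enr_order_eq (x : P → ℝ) : x ∈ convexHull ℝ (enrichedOrderVerts P) ↔
    ∀ k : EnrIdx P, enrForm k x ≤ enrRhs k := by
  constructor
  · intro hx k
    have hc : Convex ℝ {x | enrForm k x ≤ enrRhs k} :=
      convex_halfSpace_le (enrForm k).isLinear _
    refine convexHull_min ?_ hc hx
    intro v hv
    rcases k with ⟨l, hl⟩ | ⟨l, hl⟩
    · cases l with
      | nil => exact absurd rfl hl.1
      | cons a l =>
        have := enr_vert_bound hv (enr_sat_pw hl)
        rw [enr_V_eq] at this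
        have := le_abs_self (v a)
        simp [enrForm, enrA, enrRhs]; linarith
    · cases l with
      | nil => exact absurd rfl hl.1
      | cons a l =>
        have := enr_vert_bound hv (enr_sat_pw (enr_max_iff.1 hl).1)
        rw [enr_V_eq] at this
        have := neg_abs_le (v a)
        simp [enrForm, enrA, enrRhs]; linarith
  · intro h
    refine enr_mem_of_ineq ?_ ?_
    · intro i l hl
      have := h (.inl ⟨_, hl⟩)
      simp [enrForm, enrA, enrRhs] at this
      rw [enr_V_eq]; linarith
    · intro i l hl
      have := h (.inr ⟨_, hl⟩)
      simp [enrForm, enrA, enrRhs] at this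
      rw [enr_V_eq]; linarith

lemma enr_form_ne (k : EnrIdx P) : enrForm k ≠ 0 := by
  classical
  intro h0
  rcases k with ⟨l, hl⟩ | ⟨l, hl⟩
  · cases l with
    | nil => exact absurd rfl hl.1
    | cons a l =>
      have hn := (List.nodup_cons.1 (enr_sat_nodup hl)).1
      have := congrArg (fun f => f (Pi.single a 1)) h0
      simp [enrForm, enrA, enr_L_single hn] at this
  · cases l with
    | nil => exact absurd rfl hl.1
    | cons a l =>
      have hn := (List.nodup_cons.1 (enr_sat_nodup (enr_max_iff.1 hl).1)).1
      have := congrArg (fun f => f (Pi.single a 1)) h0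
      simp [enrForm, enrA, enr_L_single hn] at this

/-- A facet of a polyhedron is cut out by one of its inequalities. -/
lemma enr_facet_of_ineq {κ : Type*} [Finite κ] {S F : Set (P → ℝ)}
    (A : κ → ((P → ℝ) →ₗ[ℝ] ℝ)) (b : κ → ℝ) (hA : ∀ k, A k ≠ 0)
    (hS : ∀ x, x ∈ S ↔ ∀ k, A k x ≤ b k) (hF : IsFacetOf P S F) :
    ∃ k, F = {x | x ∈ S ∧ A k x = b k} := by
  classical
  cases nonempty_fintype κ
  obtain ⟨hne, hexp, hFS, hdim⟩ := hF
  obtain ⟨f, hf⟩ := hexp hne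
  have hSconv : Convex ℝ S := by
    have : S = ⋂ k, {x | A k x ≤ b k} := by ext x; simp [hS]
    rw [this]
    exact convex_iInter fun k => convex_halfSpace_le (A k).isLinear _
  have hFconv : Convex ℝ F := hexp.convex hSconv
  have hFsub : F ⊆ S := by rw [hf]; exact fun x hx => hx.1
  by_cases hk : ∃ k, ∀ x ∈ F, A k x = b k
  · obtain ⟨k, hk⟩ := hk
    refine ⟨k, ?_⟩
    have hle : vectorSpan ℝ F ≤ LinearMap.ker (A k) := by
      rw [vectorSpan_def, Submodule.span_le]
      rintro _ ⟨p, hp, q, hq, rfl⟩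
      simp [hk p hp, hk q hq]
    have hker := Module.Dual.finrank_ker_add_one_of_ne_zero (hA k)
    rw [Module.finrank_fintype_fun_eq_card] at hker
    have heq : vectorSpan ℝ F = LinearMap.ker (A k) :=
      Submodule.eq_of_le_of_finrank_eq hle (by omega)
    have hlef : vectorSpan ℝ F ≤ LinearMap.ker f.toLinearMap := by
      rw [vectorSpan_def, Submodule.span_le]
      rintro _ ⟨p, hp, q, hq, rfl⟩
      rw [hf] at hp hq
      have h1 := hp.2 q hq.1
      have h2 := hq.2 p hp.1
      simp; linarith
    obtain ⟨p, hp⟩ := hne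
    apply Set.Subset.antisymm
    · exact fun x hx => ⟨hFsub hx, hk x hx⟩
    · rintro q ⟨hqS, hq⟩
      have hm : q - p ∈ LinearMap.ker (A k) := by simp [hq, hk p hp]
      have := hlef (heq ▸ hm)
      have h3 : f q = f p := by
        have : f (q - p) = 0 := this
        rw [map_sub] at this; linarith
      rw [hf] at hp ⊢
      exact ⟨hqS, fun y hy => h3 ▸ hp.2 y hy⟩
  · exfalso
    push Not at hk
    -- a point of F with all inequalities strict
    have hstrict : ∃ p ∈ F, ∀ k, A k p < b k := by
      have : ∀ s : Finset κ, ∃ p ∈ F, ∀ k ∈ s, A k p < b k := by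
        intro s
        induction s using Finset.induction_on with
        | empty => obtain ⟨p, hp⟩ := hne; exact ⟨p, hp, by simp⟩
        | insert k s _ ih =>
          obtain ⟨p, hp, hps⟩ := ih
          obtain ⟨q, hq, hqk⟩ := hk k
          have hqk' : A k q < b k := lt_of_le_of_ne ((hS q).1 (hFsub hq) k) hqk
          refine ⟨(1 / 2 : ℝ) • p + (1 / 2 : ℝ) • q,
            hFconv hp hq (by norm_num) (by norm_num) (by norm_num), ?_⟩
          intro j hj
          have hp' := (hS p).1 (hFsub hp) j
          have hq' := (hS q).1 (hFsub hq) j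
          simp only [map_add, map_smul, smul_eq_mul]
          rcases Finset.mem_insert.1 hj with rfl | hj
          · linarith
          · have := hps j hj; linarith
      obtain ⟨p, hp, h⟩ := this Finset.univ
      exact ⟨p, hp, fun k => h k (Finset.mem_univ k)⟩
    obtain ⟨p, hp, hps⟩ := hstrict
    have hopen : IsOpen {x : P → ℝ | ∀ k, A k x < b k} := by
      simp only [Set.setOf_forall]
      exact isOpen_iInter_of_finite fun k =>
        isOpen_lt (A k).continuous_of_finiteDimensional continuous_const
    have hmaxp : ∀ y ∈ S, f y ≤ f p := by rw [hf] at hp; exact hp.2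
    have hf0 : ∀ v, f v ≤ 0 := by
      intro v
      have hcont : Filter.Tendsto (fun t : ℝ => p + t • v) (nhdsWithin 0 (Set.Ioi 0))
          (nhds p) := by
        have : Continuous (fun t : ℝ => p + t • v) := by fun_prop
        have h := this.tendsto 0
        simp only [zero_smul, add_zero] at h
        exact h.mono_left nhdsWithin_le_nhds
      have hev := hcont.eventually (hopen.mem_nhds hps)
      obtain ⟨t, ht, ht0⟩ := (hev.and self_mem_nhdsWithin).exists
      have ht0 : 0 < t := ht0
      have h := hmaxp (p + t • v) ((hS _).2 fun k => (ht k).le)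
      simp only [map_add, map_smul, smul_eq_mul] at h
      by_contra hcon
      push Not at hcon
      have := mul_pos ht0 hcon
      linarith
    have hfz : ∀ v, f v = 0 := fun v => le_antisymm (hf0 v) (by
      have := hf0 (-v); rw [map_neg] at this; linarith)
    apply hFS
    rw [hf]; ext x; simp [hfz]

lemma enr_order_facets :
    Set.ncard {F : Set (P → ℝ) | IsFacetOf P (convexHull ℝ (enrichedOrderVerts P)) F}
      ≤ Nat.card {l : List P // IsSatChainToMax l} + Nat.card {l : List P // IsMaxChainList l} := by
  haveI : Finite {l : List P // IsSatChainToMax l} := enr_sat_finite.to_subtype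
  haveI : Finite {l : List P // IsMaxChainList l} := enr_max_finite.to_subtype
  rw [← Nat.card_sum]
  have hsub : {F : Set (P → ℝ) | IsFacetOf P (convexHull ℝ (enrichedOrderVerts P)) F} ⊆
      (fun k : EnrIdx P => {x | x ∈ convexHull ℝ (enrichedOrderVerts P) ∧
        enrForm k x = enrRhs k}) '' Set.univ := by
    intro F hF
    obtain ⟨k, hk⟩ := enr_facet_of_ineq enrForm enrRhs enr_form_ne enr_order_eq hF
    exact ⟨k, trivial, hk.symm⟩
  refine (Set.ncard_le_ncard hsub (Set.toFinite _)).trans ?_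
  refine (Set.ncard_image_le (Set.toFinite _)).trans ?_
  rw [Set.ncard_univ]

end Enr2
section Enr3
variable {P : Type*} [PartialOrder P] [Fintype P]

lemma enr_incomp {j : P} : ∀ (l : List P) (a : P), IsSatChainToMax (a :: l) → a < j →
    j ∉ a :: l → ∃ i ∈ a :: l, ¬ i ≤ j ∧ ¬ j ≤ i := by
  intro l
  induction l with
  | nil => intro a ha haj _; exact absurd haj (enr_sat_single.1 ha).not_lt
  | cons b l ih =>
    intro a ha haj hj
    obtain ⟨hab, hb⟩ := enr_sat_cons.1 ha
    have hj' : j ∉ b :: l := fun h => hj (List.mem_cons_of_mem _ h)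
    have hjb : j ≠ b := fun h => hj' (h ▸ List.mem_cons_self)
    by_cases h1 : b ≤ j
    · obtain ⟨i, hi, h⟩ := ih b hb (lt_of_le_of_ne h1 hjb.symm) hj'
      exact ⟨i, List.mem_cons_of_mem _ hi, h⟩
    · refine ⟨b, by simp, h1, fun h2 => ?_⟩
      exact hab.2 haj (lt_of_le_of_ne h2 hjb)

lemma enr_max_incomp {l : List P} (hl : IsMaxChainList l) {j : P} (hj : j ∉ l) :
    ∃ i ∈ l, ¬ i ≤ j ∧ ¬ j ≤ i := by
  cases l with
  | nil => exact absurd rfl hl.1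
  | cons a l =>
    obtain ⟨h1, h2⟩ := enr_max_cons.1 hl
    have hja : j ≠ a := fun h => hj (h ▸ List.mem_cons_self)
    by_cases h : a ≤ j
    · exact enr_incomp l a h1 (lt_of_le_of_ne h hja.symm) hj
    · exact ⟨a, by simp, h, fun h' => h (h2 h')⟩

/-- signed sum over a finset -/
noncomputable def enrS (C : Finset P) (σ : P → ℝ) : (P → ℝ) →ₗ[ℝ] ℝ :=
  ∑ i ∈ C, σ i • LinearMap.proj i

lemma enr_S_apply (C : Finset P) (σ x : P → ℝ) : enrS C σ x = ∑ i ∈ C, σ i * x i := by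
  simp [enrS]

lemma enr_S_single [DecidableEq P] (C : Finset P) (σ : P → ℝ) (j : P) (s : ℝ) :
    enrS C σ (Pi.single j s) = if j ∈ C then σ j * s else 0 := by
  rw [enr_S_apply]
  simp [Pi.single_apply]

/-- The face. -/
def enrFace (C : Finset P) (σ : P → ℝ) : Set (P → ℝ) :=
  {x | x ∈ convexHull ℝ (enrichedChainVerts P) ∧ enrS C σ x = 1}

lemma enr_S_le {C : Finset P} {σ : P → ℝ} (hC : ∀ i ∈ C, ∀ j ∈ C, i ≤ j ∨ j ≤ i)
    (hσ : ∀ i, σ i = 1 ∨ σ i = -1) {x : P → ℝ}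
    (hx : x ∈ convexHull ℝ (enrichedChainVerts P)) : enrS C σ x ≤ 1 := by
  classical
  have hc : Convex ℝ {x | enrS C σ x ≤ 1} := convex_halfSpace_le (enrS C σ).isLinear _
  refine convexHull_min ?_ hc hx
  rintro v ⟨A, hA, h1, h2⟩
  show enrS C σ v ≤ 1
  rw [enr_S_apply]
  by_cases h : ∃ i ∈ C, i ∈ A
  · obtain ⟨i, hi, hiA⟩ := h
    rw [Finset.sum_eq_single i]
    · rcases h1 i hiA with h | h <;> rcases hσ i with h' | h' <;> rw [h, h'] <;> norm_num
    · intro j hj hne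
      rw [h2 j, mul_zero]
      intro hjA
      rcases hC i hi j hj with h | h
      · exact hne (hA.eq hiA hjA h).symm
      · exact hne (hA.eq hjA hiA h)
    · exact fun h => absurd hi h
  · push Not at h
    rw [Finset.sum_eq_zero]
    · norm_num
    · intro i hi; rw [h2 i (h i hi), mul_zero]

lemma enr_single_mem [DecidableEq P] (j : P) {s : ℝ} (hs : s = 1 ∨ s = -1) :
    (Pi.single j s : P → ℝ) ∈ convexHull ℝ (enrichedChainVerts P) := by
  refine subset_convexHull ℝ _ ⟨{j}, by simp, ?_, ?_⟩
  · rintro i rfl; simpa using hs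
  · intro i hi
    have : i ≠ j := hi
    simp [this]

lemma enr_pair_mem [DecidableEq P] {i j : P} (h1 : ¬ i ≤ j) (h2 : ¬ j ≤ i) {s t : ℝ}
    (hs : s = 1 ∨ s = -1) (ht : t = 1 ∨ t = -1) :
    (Pi.single i s + Pi.single j t : P → ℝ) ∈ convexHull ℝ (enrichedChainVerts P) := by
  have hne : i ≠ j := fun h => h1 h.le
  refine subset_convexHull ℝ _ ⟨{i, j}, ?_, ?_, ?_⟩
  · rintro a (rfl | rfl) b (rfl | rfl) hab <;> simp_all
  · rintro a (rfl | rfl)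
    · simpa [hne] using hs
    · simpa [hne.symm] using ht
  · intro a ha
    simp only [Set.mem_insert_iff, Set.mem_singleton_iff, not_or] at ha
    simp [ha.1, ha.2]

lemma enr_face_facet {C : Finset P} {σ : P → ℝ} (hne : C.Nonempty)
    (hC : ∀ i ∈ C, ∀ j ∈ C, i ≤ j ∨ j ≤ i)
    (hmax : ∀ j, j ∉ C → ∃ i ∈ C, ¬ i ≤ j ∧ ¬ j ≤ i)
    (hσ : ∀ i, σ i = 1 ∨ σ i = -1) :
    IsFacetOf P (convexHull ℝ (enrichedChainVerts P)) (enrFace C σ) := by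
  classical
  obtain ⟨k, hk⟩ := hne
  have hσσ : ∀ i, σ i * σ i = 1 := fun i => by
    rcases hσ i with h | h <;> rw [h] <;> norm_num
  have hmem : ∀ i ∈ C, (Pi.single i (σ i) : P → ℝ) ∈ enrFace C σ := fun i hi =>
    ⟨enr_single_mem i (hσ i), by rw [enr_S_single, if_pos hi, hσσ]⟩
  have hker0 : enrS C σ ≠ 0 := by
    intro h
    have := (hmem k hk).2
    rw [h] at this; simp at this
  refine ⟨⟨_, hmem k hk⟩, ?_, ?_, ?_⟩
  · intro _
    refine ⟨LinearMap.toContinuousLinearMap (enrS C σ), ?_⟩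
    ext x
    constructor
    · rintro ⟨h1, h2⟩
      refine ⟨h1, fun y hy => ?_⟩
      have := enr_S_le hC hσ hy
      simpa [h2] using this
    · rintro ⟨h1, h2⟩
      refine ⟨h1, le_antisymm (enr_S_le hC hσ h1) ?_⟩
      have := h2 _ (hmem k hk).1
      simpa [(hmem k hk).2] using this
  · intro h
    have h1 : (Pi.single k (-σ k) : P → ℝ) ∈ enrFace C σ := by
      rw [h]
      refine enr_single_mem k ?_
      rcases hσ k with h | h <;> rw [h] <;> norm_num
    have := h1.2
    rw [enr_S_single, if_pos hk, mul_neg, hσσ] at this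
    norm_num at this
  · have hker := Module.Dual.finrank_ker_add_one_of_ne_zero hker0
    rw [Module.finrank_fintype_fun_eq_card] at hker
    suffices vectorSpan ℝ (enrFace C σ) = LinearMap.ker (enrS C σ) by
      rw [this]; omega
    apply le_antisymm
    · rw [vectorSpan_def, Submodule.span_le]
      rintro _ ⟨p, hp, q, hq, rfl⟩
      simp [hp.2, hq.2]
    · intro v hv
      have hv : enrS C σ v = 0 := hv
      rw [enr_S_apply] at hv
      have hdec : v = ∑ i, v i • (Pi.single i 1 - if i ∈ C then σ i • Pi.single k (σ k) else 0 :
          P → ℝ) := by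
        simp only [smul_sub, Finset.sum_sub_distrib]
        have e1 : ∑ i, v i • (Pi.single i 1 : P → ℝ) = v := by
          ext j; simp [Finset.sum_apply, Pi.single_apply]
        have e2 : ∑ i, v i • (if i ∈ C then σ i • Pi.single k (σ k) else 0 : P → ℝ) = 0 := by
          have : ∀ i, v i • (if i ∈ C then σ i • Pi.single k (σ k) else 0 : P → ℝ)
              = (if i ∈ C then σ i * v i else 0) • (Pi.single k (σ k) : P → ℝ) := by
            intro i
            split_ifs
            · rw [smul_smul, mul_comm]
            · simp
          simp only [this]
          rw [← Finset.sum_smul, Finset.sum_ite_mem, Finset.univ_inter, hv, zero_smul]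
        rw [e1, e2, sub_zero]
      rw [hdec]
      refine Submodule.sum_mem _ fun j _ => Submodule.smul_mem _ _ ?_
      by_cases hj : j ∈ C
      · rw [if_pos hj]
        have h := vsub_mem_vectorSpan ℝ (hmem j hj) (hmem k hk)
        have h' := Submodule.smul_mem _ (σ j) h
        convert h' using 1
        rw [vsub_eq_sub, smul_sub]
        congr 1
        rw [← Pi.single_smul, smul_eq_mul, hσσ]
      · rw [if_neg hj, sub_zero]
        obtain ⟨i, hi, h1, h2⟩ := hmax j hj
        have hp : (Pi.single i (σ i) + Pi.single j 1 : P → ℝ) ∈ enrFace C σ :=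
          ⟨enr_pair_mem h1 h2 (hσ i) (Or.inl rfl), by
            rw [map_add, enr_S_single, enr_S_single, if_pos hi, if_neg hj, hσσ, add_zero]⟩
        have h := vsub_mem_vectorSpan ℝ hp (hmem i hi)
        simpa using h

open Classical in
/-- sign pattern of a subset -/
noncomputable def enrSign (T : Finset P) (i : P) : ℝ := if i ∈ T then 1 else -1

lemma enr_sign (T : Finset P) (i : P) : enrSign T i = 1 ∨ enrSign T i = -1 := by
  unfold enrSign; split_ifs <;> simp

lemma enr_face_mem_one [DecidableEq P] {C T : Finset P} (hT : T ⊆ C) (i : P) :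
    (Pi.single i 1 : P → ℝ) ∈ enrFace C (enrSign T) ↔ i ∈ T := by
  have := enr_single_mem i (Or.inl rfl : (1 : ℝ) = 1 ∨ (1 : ℝ) = -1)
  simp only [enrFace, Set.mem_setOf_eq, this, true_and, enr_S_single, enrSign]
  constructor
  · intro h
    by_contra hi
    rw [if_neg hi] at h
    split_ifs at h <;> norm_num at h
  · intro h; simp [h, hT h]

lemma enr_face_mem_neg [DecidableEq P] {C T : Finset P} (i : P) :
    (Pi.single i (-1) : P → ℝ) ∈ enrFace C (enrSign T) ↔ i ∈ C ∧ i ∉ T := by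
  have := enr_single_mem i (Or.inr rfl : (-1 : ℝ) = 1 ∨ (-1 : ℝ) = -1)
  simp only [enrFace, Set.mem_setOf_eq, this, true_and, enr_S_single, enrSign]
  constructor
  · intro h
    split_ifs at h with h1 h2
    · norm_num at h
    · exact ⟨h1, h2⟩
    · norm_num at h
  · rintro ⟨h, h'⟩; simp [h, h']

lemma enr_facets_finite :
    {F : Set (P → ℝ) | IsFacetOf P (convexHull ℝ (enrichedChainVerts P)) F}.Finite := by
  have hK : IsCompact (convexHull ℝ (enrichedChainVerts P)) :=
    enr_chain_verts_finite.isCompact_convexHull ℝ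
  refine Set.Finite.of_finite_image (f := fun F => Set.extremePoints ℝ F)
    (enr_chain_verts_finite.finite_subsets.subset ?_) ?_
  · rintro _ ⟨F, hF, rfl⟩
    exact (hF.2.1.isExtreme.extremePoints_subset_extremePoints).trans
      extremePoints_convexHull_subset
  · intro F hF G hG h
    have e1 := closure_convexHull_extremePoints (hF.2.1.isCompact hK)
      (hF.2.1.convex (convex_convexHull ℝ _))
    have e2 := closure_convexHull_extremePoints (hG.2.1.isCompact hK)
      (hG.2.1.convex (convex_convexHull ℝ _))
    have h : Set.extremePoints ℝ F = Set.extremePoints ℝ G := h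
    rw [← e1, ← e2, h]

lemma enr_chain_facets : ∑ m ∈ enrMC P, 2 ^ m.length ≤
    Set.ncard {F : Set (P → ℝ) | IsFacetOf P (convexHull ℝ (enrichedChainVerts P)) F} := by
  classical
  let I : Finset (Σ _ : List P, Finset P) := (enrMC P).sigma (fun m => m.toFinset.powerset)
  have hI : I.card = ∑ m ∈ enrMC P, 2 ^ m.length := by
    rw [Finset.card_sigma]
    refine Finset.sum_congr rfl fun m hm => ?_
    rw [Finset.card_powerset, List.toFinset_card_of_nodup
      (enr_sat_nodup (enr_max_iff.1 (enr_mem_MC.1 hm)).1)]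
  rw [← hI, ← Set.ncard_coe_finset]
  refine Set.ncard_le_ncard_of_injOn (fun p => enrFace p.1.toFinset (enrSign p.2)) ?_ ?_
    enr_facets_finite
  · rintro ⟨m, T⟩ hp
    have hp := Finset.mem_sigma.1 (Finset.mem_coe.1 hp)
    have hm : IsMaxChainList m := enr_mem_MC.1 hp.1
    refine enr_face_facet (List.toFinset_nonempty_iff _ |>.2 hm.1) ?_ ?_ (enr_sign T)
    · have hpw : m.Pairwise (fun a b => a ≤ b ∨ b ≤ a) :=
        (enr_sat_pw (enr_max_iff.1 hm).1).imp (fun h => Or.inl h.le)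
      intro i hi j hj
      by_cases hij : i = j
      · exact Or.inl hij.le
      · haveI : Std.Symm (fun a b : P => a ≤ b ∨ b ≤ a) := ⟨fun _ _ h => h.symm⟩
        exact hpw.forall (List.mem_toFinset.1 hi)
          (List.mem_toFinset.1 hj) hij
    · intro j hj
      obtain ⟨i, hi, h⟩ := enr_max_incomp hm (fun h => hj (List.mem_toFinset.2 h))
      exact ⟨i, List.mem_toFinset.2 hi, h⟩
  · rintro ⟨m, T⟩ hp ⟨m', T'⟩ hp' heq
    have hp := Finset.mem_sigma.1 (Finset.mem_coe.1 hp)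
    have hp' := Finset.mem_sigma.1 (Finset.mem_coe.1 hp')
    have heq : enrFace m.toFinset (enrSign T) = enrFace m'.toFinset (enrSign T') := heq
    have hT := Finset.mem_powerset.1 hp.2
    have hT' := Finset.mem_powerset.1 hp'.2
    have hTT : T = T' := by
      ext i
      rw [← enr_face_mem_one hT, ← enr_face_mem_one hT', heq]
    subst hTT
    have hCC : ∀ i, i ∈ m ↔ i ∈ m' := by
      intro i
      by_cases hi : i ∈ T
      · exact ⟨fun _ => List.mem_toFinset.1 (hT' hi), fun _ => List.mem_toFinset.1 (hT hi)⟩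
      · have h1 := enr_face_mem_neg (C := m.toFinset) (T := T) i
        have h2 := enr_face_mem_neg (C := m'.toFinset) (T := T) i
        rw [heq, h2] at h1
        simp only [List.mem_toFinset, hi, not_false_eq_true, and_true] at h1
        exact h1.symm
    have s1 := (enr_max_iff.1 (enr_mem_MC.1 hp.1)).1
    have s2 := (enr_max_iff.1 (enr_mem_MC.1 hp'.1)).1
    have : m = m' := List.Perm.eq_of_pairwise
      (fun a b _ _ h1 h2 => absurd h2 h1.asymm) (enr_sat_pw s1) (enr_sat_pw s2)
      ((List.perm_ext_iff_of_nodup (enr_sat_nodup s1) (enr_sat_nodup s2)).2 hCC)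
    rw [this]

end Enr3
/-- `sc(P) + mc(P) ≤ Σ_ℓ 2^{ℓ+1} mc_ℓ(P)`; consequently `O^(e)_P` has at most
as many facets as `C^(e)_P`. -/
theorem stmt14 (P : Type*) [Fintype P] [PartialOrder P] :
    (Nat.card {l : List P // IsSatChainToMax l}
        + Nat.card {l : List P // IsMaxChainList l}
      ≤ ∑ ℓ ∈ Finset.range (Fintype.card P),
          2 ^ (ℓ + 1) * Nat.card {l : List P // IsMaxChainList l ∧ l.length = ℓ + 1}) ∧
    Set.ncard {F : Set (P → ℝ) | IsFacetOf P (convexHull ℝ (enrichedOrderVerts P)) F}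
      ≤ Set.ncard {F : Set (P → ℝ) | IsFacetOf P (convexHull ℝ (enrichedChainVerts P)) F} := by
  refine ⟨enr_part1, ?_⟩
  refine enr_order_facets.trans (enr_part1.trans ?_)
  rw [enr_rhs]
  exact enr_chain_facets
end

section
/- Let P be a finite poset on {1,...,n}. The number of facets of the enriched chain polytope C^(e)_P is at most 2^n, with equality if P is a chain. -/
open Classical in
/-- maximal elements of a finset -/
noncomputable def ecTops {P : Type*} [PartialOrder P] (s : Finset P) : Finset P :=
  s.filter (fun x => ∀ y ∈ s, x ≤ y → y = x)

open Classical in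
/-- minimal elements of a finset -/
noncomputable def ecBots {P : Type*} [PartialOrder P] (s : Finset P) : Finset P :=
  s.filter (fun x => ∀ y ∈ s, y ≤ x → y = x)

open Classical in
/-- maximal chains inside a finset -/
noncomputable def ecMC {P : Type*} [PartialOrder P] (s : Finset P) : Finset (Finset P) :=
  s.powerset.filter (fun C => IsChain (· ≤ ·) (C : Set P) ∧
    ∀ x ∈ s, (∀ y ∈ C, x ≤ y ∨ y ≤ x) → x ∈ C)

theorem ec_le_tops {P : Type*} [PartialOrder P] (s : Finset P) (x : P) (hx : x ∈ s) :
    ∃ y ∈ ecTops s, x ≤ y := by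
  obtain ⟨y, hxy, hy⟩ := s.exists_le_maximal hx
  refine ⟨y, ?_, hxy⟩
  simp only [ecTops, Finset.mem_filter]
  exact ⟨hy.1, fun z hz hyz => le_antisymm (hy.2 hz hyz) hyz⟩

theorem ec_k (k : ℕ) : k * 2 ≤ 2 ^ k := by
  induction k with
  | zero => simp
  | succ k ih =>
    rcases Nat.eq_zero_or_pos k with h | h
    · subst h; simp
    · rw [pow_succ]
      have : 2 ≤ 2 ^ k := by
        calc 2 = 2 ^ 1 := rfl
          _ ≤ 2 ^ k := Nat.pow_le_pow_right (by norm_num) h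
      omega

theorem ec_sum_biUnion {α β : Type*} [DecidableEq β] (s : Finset α) (t : α → Finset β)
    (f : β → ℕ) : ∑ x ∈ s.biUnion t, f x ≤ ∑ a ∈ s, ∑ x ∈ t a, f x := by
  classical
  induction s using Finset.induction_on with
  | empty => simp
  | insert a s ha ih =>
    rw [Finset.biUnion_insert, Finset.sum_insert ha]
    have := Finset.sum_union_inter (s₁ := t a) (s₂ := s.biUnion t) (f := f)
    omega

open Classical in
theorem ec_count {P : Type*} [PartialOrder P] (n : ℕ) : ∀ s : Finset P, s.card = n →
    ∑ C ∈ ecMC s, 2 ^ C.card ≤ 2 ^ s.card := by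
  induction n using Nat.strong_induction_on with
  | _ n ih =>
  intro s hs
  rcases s.eq_empty_or_nonempty with rfl | hne
  · have : ecMC (∅ : Finset P) ⊆ {∅} := by
      intro C hC
      simp only [ecMC, Finset.mem_filter, Finset.mem_powerset] at hC
      simpa using hC.1
    calc _ ≤ ∑ C ∈ ({∅} : Finset (Finset P)), 2 ^ C.card :=
          Finset.sum_le_sum_of_subset this
      _ = _ := by simp
  -- decomposition
  have hsub : ecMC s ⊆ (ecTops s).biUnion
      (fun m => (ecMC (s.filter (· < m))).image (fun C => insert m C)) := by
    intro C hC
    simp only [ecMC, Finset.mem_filter, Finset.mem_powerset] at hC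
    obtain ⟨hCs, hch, hmax⟩ := hC
    have hCne : C.Nonempty := by
      rw [Finset.nonempty_iff_ne_empty]
      rintro rfl
      obtain ⟨x, hx⟩ := hne
      simpa using hmax x hx (by simp)
    obtain ⟨z, hz⟩ := hCne
    obtain ⟨c, -, hc⟩ := C.exists_le_maximal hz
    have hcall : ∀ y ∈ C, y ≤ c := by
      intro y hy
      rcases hch.total hy hc.1 with h | h
      · exact h
      · exact hc.2 hy h
    obtain ⟨m, hm, hcm⟩ := ec_le_tops s c (hCs hc.1)
    have hms : m ∈ s := (Finset.mem_filter.1 hm).1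
    have hmC : m ∈ C := hmax m hms (fun y hy => Or.inr ((hcall y hy).trans hcm))
    have hmtop : ∀ y ∈ C, y ≤ m := fun y hy => (hcall y hy).trans hcm
    simp only [Finset.mem_biUnion, Finset.mem_image]
    refine ⟨m, hm, C.erase m, ?_, Finset.insert_erase hmC⟩
    simp only [ecMC, Finset.mem_filter, Finset.mem_powerset]
    refine ⟨?_, ?_, ?_⟩
    · intro y hy
      rw [Finset.mem_erase] at hy
      rw [Finset.mem_filter]
      exact ⟨hCs hy.2, lt_of_le_of_ne (hmtop y hy.2) hy.1⟩
    · exact hch.mono (by simp)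
    · rintro x ⟨hxs, hxm⟩ hx
      rw [Finset.mem_erase]
      refine ⟨hxm.ne, hmax x hxs ?_⟩
      intro y hy
      by_cases hym : y = m
      · subst hym; exact Or.inl hxm.le
      · exact hx y (Finset.mem_erase.2 ⟨hym, hy⟩)
  have hk : ∀ m ∈ ecTops s, ∑ C ∈ (ecMC (s.filter (· < m))).image (fun C => insert m C), 2 ^ C.card
      ≤ 2 * 2 ^ (s.card - (ecTops s).card) := by
    intro m hm
    have hdis : (s.filter (· < m)) ⊆ s \ ecTops s := by
      intro y hy
      rw [Finset.mem_filter] at hy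
      rw [Finset.mem_sdiff]
      refine ⟨hy.1, fun h => ?_⟩
      have := (Finset.mem_filter.1 h).2 m (Finset.mem_filter.1 hm).1 hy.2.le
      exact hy.2.ne this.symm
    have hts : ecTops s ⊆ s := Finset.filter_subset _ _
    have hcard : (s.filter (· < m)).card ≤ s.card - (ecTops s).card := by
      rw [← Finset.card_sdiff_of_subset hts]
      exact Finset.card_le_card hdis
    have hlt : (s.filter (· < m)).card < n := by
      have h1 : 0 < (ecTops s).card := Finset.card_pos.2 ⟨m, hm⟩
      have h2 := Finset.card_pos.2 hne
      omega
    calc _ ≤ ∑ C ∈ ecMC (s.filter (· < m)), 2 ^ (insert m C).card :=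
          by
          rw [Finset.sum_image]
          intro C hC C' hC' h
          have hnot : ∀ E ∈ ecMC (s.filter (· < m)), m ∉ E := by
            intro E hE hmE
            have := (Finset.mem_powerset.1 (Finset.mem_filter.1 hE).1) hmE
            simp at this
          have h' : insert m C = insert m C' := h
          rw [← Finset.erase_insert (hnot C hC), h', Finset.erase_insert (hnot C' hC')]
      _ ≤ ∑ C ∈ ecMC (s.filter (· < m)), 2 * 2 ^ C.card := by
          refine Finset.sum_le_sum fun C _ => ?_
          rw [← pow_succ']
          exact Nat.pow_le_pow_right (by norm_num) (Finset.card_insert_le _ _)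
      _ = 2 * ∑ C ∈ ecMC (s.filter (· < m)), 2 ^ C.card := by rw [Finset.mul_sum]
      _ ≤ 2 * 2 ^ (s.filter (· < m)).card := Nat.mul_le_mul_left _ (ih _ hlt _ rfl)
      _ ≤ _ := Nat.mul_le_mul_left _ (Nat.pow_le_pow_right (by norm_num) hcard)
  have hle : (ecTops s).card ≤ s.card := Finset.card_le_card (Finset.filter_subset _ _)
  calc _ ≤ ∑ C ∈ (ecTops s).biUnion
        (fun m => (ecMC (s.filter (· < m))).image (fun C => insert m C)), 2 ^ C.card :=
        Finset.sum_le_sum_of_subset hsub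
    _ ≤ ∑ m ∈ ecTops s, ∑ C ∈ (ecMC (s.filter (· < m))).image (fun C => insert m C), 2 ^ C.card :=
        ec_sum_biUnion _ _ _
    _ ≤ ∑ m ∈ ecTops s, 2 * 2 ^ (s.card - (ecTops s).card) := Finset.sum_le_sum hk
    _ = ((ecTops s).card * 2) * 2 ^ (s.card - (ecTops s).card) := by
        rw [Finset.sum_const, smul_eq_mul, mul_assoc]
    _ ≤ 2 ^ (ecTops s).card * 2 ^ (s.card - (ecTops s).card) :=
        Nat.mul_le_mul_right _ (ec_k _)
    _ = 2 ^ s.card := by rw [← pow_add]; congr 1; omega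

/-- maximum weight antichain in the positive support -/
def EcMA {P : Type*} [PartialOrder P] (w : P → ℝ) (M : ℝ) (A : Finset P) : Prop :=
  IsAntichain (· ≤ ·) (A : Set P) ∧ (∀ i ∈ A, 0 < w i) ∧ ∑ i ∈ A, w i = M

open Classical in
theorem ec_join {P : Type*} [PartialOrder P] (w : P → ℝ) (M : ℝ)
    (hM : ∀ B : Finset P, IsAntichain (· ≤ ·) (B : Set P) → ∑ i ∈ B, w i ≤ M)
    (A B : Finset P) (hA : EcMA w M A) (hB : EcMA w M B) : EcMA w M (ecTops (A ∪ B)) := by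
  have aT : IsAntichain (· ≤ ·) ((ecTops (A ∪ B) : Finset P) : Set P) := by
    intro x hx y hy hne hxy
    simp only [ecTops, Finset.coe_filter, Set.mem_ofPred_eq] at hx hy
    exact hne (hx.2 y hy.1 hxy).symm
  have aB : IsAntichain (· ≤ ·) ((ecBots (A ∪ B) : Finset P) : Set P) := by
    intro x hx y hy hne hxy
    simp only [ecBots, Finset.coe_filter, Set.mem_ofPred_eq] at hx hy
    exact hne (hy.2 x hx.1 hxy)
  have hpos : ∀ i ∈ A ∪ B, 0 < w i := by
    intro i hi
    rcases Finset.mem_union.1 hi with h | h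
    · exact hA.2.1 i h
    · exact hB.2.1 i h
  have hAA : ∀ x ∈ A, ∀ y ∈ A, x ≤ y → x = y := fun x hx y hy h => hA.1.eq hx hy h
  have hBB : ∀ x ∈ B, ∀ y ∈ B, x ≤ y → x = y := fun x hx y hy h => hB.1.eq hx hy h
  have hT := hM _ aT
  have hBt := hM _ aB
  have e1 := Finset.sum_union_inter (s₁ := A) (s₂ := B) (f := w)
  have e2 := Finset.sum_union_inter (s₁ := ecTops (A ∪ B)) (s₂ := ecBots (A ∪ B)) (f := w)
  have s1 : A ∪ B ⊆ ecTops (A ∪ B) ∪ ecBots (A ∪ B) := by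
    intro x hx
    by_contra hcon
    simp only [ecTops, ecBots, Finset.mem_union, Finset.mem_filter, not_or, not_and, not_forall] at hcon hx
    obtain ⟨y, hy, hxy, hne⟩ := hcon.1 hx
    obtain ⟨z, hz, hzx, hnz⟩ := hcon.2 hx
    rcases hx with hx | hx
    · rcases hy with hy | hy
      · exact hne (hAA x hx y hy hxy).symm
      rcases hz with hz | hz
      · exact hnz (hAA z hz x hx hzx)
      have := hBB z hz y hy (hzx.trans hxy)
      subst this
      exact hne (le_antisymm hzx hxy)
    · rcases hy with hy | hy
      swap
      · exact hne (hBB x hx y hy hxy).symm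
      rcases hz with hz | hz
      swap
      · exact hnz (hBB z hz x hx hzx)
      have := hAA z hz y hy (hzx.trans hxy)
      subst this
      exact hne (le_antisymm hzx hxy)
  have s2 : A ∩ B ⊆ ecTops (A ∪ B) ∩ ecBots (A ∪ B) := by
    intro x hx
    rw [Finset.mem_inter] at hx
    simp only [ecTops, ecBots, Finset.mem_union, Finset.mem_filter, Finset.mem_inter]
    refine ⟨⟨Or.inl hx.1, ?_⟩, ⟨Or.inl hx.1, ?_⟩⟩
    · rintro y (hy | hy) h
      · exact (hAA x hx.1 y hy h).symm
      · exact (hBB x hx.2 y hy h).symm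
    · rintro y (hy | hy) h
      · exact (hAA y hy x hx.1 h)
      · exact (hBB y hy x hx.2 h)
  have tsub : ecTops (A ∪ B) ⊆ A ∪ B := Finset.filter_subset _ _
  have bsub : ecBots (A ∪ B) ⊆ A ∪ B := Finset.filter_subset _ _
  have i1 := Finset.sum_le_sum_of_subset_of_nonneg (f := w) s1
    (fun i hi _ => (hpos i ((Finset.union_subset tsub bsub) hi)).le)
  have i2 := Finset.sum_le_sum_of_subset_of_nonneg (f := w) s2
    (fun i hi _ => (hpos i (tsub (Finset.mem_inter.1 hi).1)).le)
  refine ⟨aT, fun i hi => hpos i (tsub hi), ?_⟩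
  have := hA.2.2
  have := hB.2.2
  linarith

open Classical in
theorem ec_chain {P : Type*} [PartialOrder P] (w : P → ℝ) (M : ℝ)
    (hM : ∀ B : Finset P, IsAntichain (· ≤ ·) (B : Set P) → ∑ i ∈ B, w i ≤ M) (n : ℕ) :
    ∀ (S : Finset (Finset P)) (x : WithTop P), S.card = n → (∀ A ∈ S, EcMA w M A) →
      (∀ A ∈ S, ∀ B ∈ S, ecTops (A ∪ B) ∈ S) → (∀ A ∈ S, ∃ a ∈ A, (a : WithTop P) < x) →
      ∃ C : Finset P, IsChain (· ≤ ·) (C : Set P) ∧ (∀ i ∈ C, 0 < w i) ∧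
        (∀ i ∈ C, (i : WithTop P) < x) ∧ ∀ A ∈ S, ∃ i ∈ A, i ∈ C := by
  induction n using Nat.strong_induction_on with
  | _ n ih =>
  intro S x hn hS hJ hx
  rcases S.eq_empty_or_nonempty with rfl | hne
  · exact ⟨∅, by simp, by simp, by simp, by simp⟩
  obtain ⟨A, hA⟩ := S.exists_maximalFor (fun A : Finset P => lowerClosure (A : Set P)) hne
  have htop : ∀ B ∈ S, ∀ b ∈ B, ∃ a ∈ A, b ≤ a := by
    intro B hB b hb
    have h1 := hA.2 (hJ A hA.1 B hB) (by
      intro y hy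
      simp only [SetLike.mem_coe, mem_lowerClosure, Finset.mem_coe] at hy ⊢
      obtain ⟨a, ha, hya⟩ := hy
      obtain ⟨z, hz, haz⟩ := ec_le_tops (A ∪ B) a (Finset.mem_union_left _ ha)
      exact ⟨z, hz, hya.trans haz⟩)
    obtain ⟨z, hz, hbz⟩ := ec_le_tops (A ∪ B) b (Finset.mem_union_right _ hb)
    have h2 : b ∈ lowerClosure ((ecTops (A ∪ B) : Finset P) : Set P) := ⟨z, hz, hbz⟩
    obtain ⟨a, ha, hba⟩ := h1 h2
    exact ⟨a, ha, hba⟩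
  obtain ⟨a, haA, hax⟩ := hx A hA.1
  have hwa := (hS A hA.1).2.1 a haA
  obtain ⟨C, hC1, hC2, hC3, hC4⟩ := ih (S.filter (fun B => a ∉ B)).card
    (by
      rw [← hn]
      apply Finset.card_lt_card
      rw [Finset.ssubset_iff_of_subset (Finset.filter_subset _ _)]
      exact ⟨A, hA.1, by simp [haA]⟩)
    (S.filter (fun B => a ∉ B)) (a : WithTop P) rfl
    (fun B hB => hS B (Finset.mem_filter.1 hB).1)
    (by
      intro B hB D hD
      rw [Finset.mem_filter] at hB hD ⊢
      refine ⟨hJ B hB.1 D hD.1, fun h => ?_⟩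
      have := (Finset.mem_filter.1 h).1
      rcases Finset.mem_union.1 this with h | h
      · exact hB.2 h
      · exact hD.2 h)
    (by
      intro B hB
      rw [Finset.mem_filter] at hB
      by_contra hcon
      push Not at hcon
      have hno : ∀ b ∈ B, ¬ b ≤ a := by
        intro b hb hba
        have hne : b ≠ a := fun h => hB.2 (h ▸ hb)
        exact hcon b hb (WithTop.coe_lt_coe.2 (lt_of_le_of_ne hba hne))
      have hno' : ∀ b ∈ B, ¬ a ≤ b := by
        intro b hb hab
        obtain ⟨a', ha', hba'⟩ := htop B hB.1 b hb
        have := (hS A hA.1).1.eq haA ha' (hab.trans hba')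
        subst this
        exact hno b hb hba'
      have hanti : IsAntichain (· ≤ ·) ((insert a B : Finset P) : Set P) := by
        rw [Finset.coe_insert]
        refine (hS B hB.1).1.insert ?_ ?_
        · intro b hb _ h
          exact hno b hb h
        · intro b hb _ h
          exact hno' b hb h
      have h3 := hM _ hanti
      rw [Finset.sum_insert hB.2, (hS B hB.1).2.2] at h3
      linarith)
  refine ⟨insert a C, ?_, ?_, ?_, ?_⟩
  · rw [Finset.coe_insert]
    refine hC1.insert ?_
    intro b hb _
    exact Or.inr (WithTop.coe_le_coe.1 (hC3 b hb).le)
  · intro i hi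
    rcases Finset.mem_insert.1 hi with rfl | h
    · exact hwa
    · exact hC2 i h
  · intro i hi
    rcases Finset.mem_insert.1 hi with rfl | h
    · exact hax
    · exact (hC3 i h).trans hax
  · intro B hB
    by_cases h : a ∈ B
    · exact ⟨a, h, by simp⟩
    · obtain ⟨i, hi, hiC⟩ := hC4 B (by simp [hB, h])
      exact ⟨i, hi, by simp [hiC]⟩

theorem ec_extend {P : Type*} [Fintype P] [PartialOrder P] (C : Finset P)
    (hC : IsChain (· ≤ ·) (C : Set P)) : ∃ D ∈ ecMC (Finset.univ : Finset P), C ⊆ D := by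
  classical
  obtain ⟨D, hCD, hD⟩ := (Finset.univ.filter
    (fun D : Finset P => IsChain (· ≤ ·) (D : Set P))).exists_le_maximal (a := C) (by simpa using hC)
  refine ⟨D, ?_, hCD⟩
  have hDc : IsChain (· ≤ ·) (D : Set P) := by simpa using hD.1
  simp only [ecMC, Finset.mem_filter, Finset.mem_powerset]
  refine ⟨Finset.subset_univ _, hDc, fun x _ hx => ?_⟩
  have h := hD.2 (y := insert x D) (by
    simp only [Finset.mem_filter, Finset.mem_univ, true_and, Finset.coe_insert]
    exact hDc.insert (fun b hb _ => hx b hb)) (Finset.subset_insert _ _)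
  exact h (Finset.mem_insert_self _ _)

/-- linear functional with given coefficients -/
noncomputable def ecLin {P : Type*} [Fintype P] (d : P → ℝ) : (P → ℝ) →ₗ[ℝ] ℝ :=
  ∑ i, d i • LinearMap.proj i

theorem ecLin_apply {P : Type*} [Fintype P] (d x : P → ℝ) : ecLin d x = ∑ i, d i * x i := by
  simp [ecLin]

open Classical in
/-- signed indicator of a chain -/
noncomputable def ecSgn {P : Type*} (C T : Finset P) (i : P) : ℝ :=
  if i ∈ C then (if i ∈ T then 1 else -1) else 0

/-- candidate facets -/
noncomputable def ecFace {P : Type*} [Fintype P] [PartialOrder P] (C T : Finset P) : Set (P → ℝ) :=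
  {x | x ∈ convexHull ℝ (enrichedChainVerts P) ∧ ecLin (ecSgn C T) x = 1}

theorem ec_convex {E : Type*} [AddCommGroup E] [Module ℝ E] (l d : E →ₗ[ℝ] ℝ) (M : ℝ) :
    Convex ℝ {x | l x < M ∨ (l x = M ∧ d x = 1)} := by
  intro x hx y hy a b ha hb hab
  simp only [Set.mem_ofPred_eq, map_add, map_smul, smul_eq_mul] at *
  rcases ha.eq_or_lt with rfl | ha'
  · have : b = 1 := by linarith
    subst this; simpa using hy
  rcases hb.eq_or_lt with rfl | hb'
  · have : a = 1 := by linarith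
    subst this; simpa using hx
  have hMM : M = a * M + b * M := by rw [← add_mul, hab, one_mul]
  rcases hx with hx | ⟨hx, hx1⟩ <;> rcases hy with hy | ⟨hy, hy1⟩
  · left
    have := mul_lt_mul_of_pos_left hx ha'
    have := mul_lt_mul_of_pos_left hy hb'
    linarith
  · left
    have := mul_lt_mul_of_pos_left hx ha'
    rw [hy]; linarith
  · left
    have := mul_lt_mul_of_pos_left hy hb'
    rw [hx]; linarith
  · right
    rw [hx, hy, hx1, hy1]
    exact ⟨hMM.symm, by linarith⟩

theorem ec_facet {P : Type*} [Fintype P] [PartialOrder P] (F : Set (P → ℝ))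
    (hF : IsFacetOf P (convexHull ℝ (enrichedChainVerts P)) F) :
    ∃ C ∈ ecMC (Finset.univ : Finset P), ∃ T ⊆ C, F = ecFace C T := by
  classical
  obtain ⟨hne, hexp, hprop, hdim⟩ := hF
  obtain ⟨l', hl'⟩ := hexp hne
  obtain ⟨x0, hx0⟩ := hne
  set c : P → ℝ := fun i => l' (Pi.single i 1) with hc
  have hlc : ∀ x, l' x = ∑ i, c i * x i := by
    intro x
    conv_lhs => rw [pi_eq_sum_univ' x]
    simp only [map_sum, map_smul, smul_eq_mul, hc]
    refine Finset.sum_congr rfl fun i _ => ?_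
    rw [mul_comm]
  set l := ecLin c with hl
  have hll : ∀ x, l' x = l x := fun x => by rw [hlc, hl, ecLin_apply]
  set S := convexHull ℝ (enrichedChainVerts P) with hSdef
  set M := l x0 with hMdef
  have hx0S : x0 ∈ S := by rw [hl'] at hx0; exact hx0.1
  have hSM : ∀ y ∈ S, l y ≤ M := by
    intro y hy
    rw [hl'] at hx0
    have := hx0.2 y hy
    rwa [hll, hll] at this
  have hFe : ∀ x, x ∈ F ↔ x ∈ S ∧ l x = M := by
    intro x
    constructor
    · intro hx
      have hx' := hx
      rw [hl'] at hx'
      refine ⟨hx'.1, le_antisymm (hSM x hx'.1) ?_⟩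
      have := hx'.2 x0 hx0S
      rwa [hll, hll] at this
    · rintro ⟨hx, hxM⟩
      rw [hl']
      refine ⟨hx, fun y hy => ?_⟩
      rw [hll, hll, hxM]
      exact hSM y hy
  have hl0 : l ≠ 0 := by
    intro h
    apply hprop
    ext x
    rw [hFe]
    simp [hMdef, h]
  have hV : ∀ v ∈ enrichedChainVerts P, l v ≤ M := fun v hv => hSM v (subset_convexHull ℝ _ hv)
  -- weights
  have hM : ∀ B : Finset P, IsAntichain (· ≤ ·) (B : Set P) → ∑ i ∈ B, |c i| ≤ M := by
    intro B hB
    have := hV (fun i => if i ∈ B then (if 0 ≤ c i then 1 else -1) else 0)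
      ⟨(B : Set P), hB, by
        intro i hi
        have hi' : i ∈ B := hi
        by_cases h : 0 ≤ c i <;> simp [hi', h], by
        intro i hi
        have hi' : i ∉ B := hi
        simp [hi']⟩
    refine le_trans (le_of_eq ?_) this
    rw [hl, ecLin_apply, ← Finset.sum_filter_add_sum_filter_not Finset.univ (fun i => i ∈ B)]
    rw [Finset.sum_eq_zero (s := Finset.univ.filter (fun i => ¬ i ∈ B))
      (by intro i hi; simp at hi; simp [hi])]
    simp only [Finset.filter_univ_mem, add_zero]
    refine Finset.sum_congr rfl fun i hi => ?_
    by_cases h : 0 ≤ c i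
    · simp [hi, h, abs_of_nonneg h]
    · simp [hi, h, abs_of_neg (not_le.1 h)]
  have hMpos : 0 < M := by
    have : ∃ i, c i ≠ 0 := by
      by_contra hcon
      push Not at hcon
      apply hl0
      ext x
      simp [hl, ecLin_apply, hcon]
    obtain ⟨i, hi⟩ := this
    have := hM {i} (by simp)
    simp only [Finset.sum_singleton] at this
    exact lt_of_lt_of_le (abs_pos.2 hi) this
  obtain ⟨C, hC1, hC2, -, hC4⟩ := ec_chain (fun i => |c i|) M hM _
    (Finset.univ.filter (fun A => EcMA (fun i => |c i|) M A)) ⊤ rfl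
    (by intro A hA; simpa using hA)
    (by
      intro A hA B hB
      simp only [Finset.mem_filter, Finset.mem_univ, true_and] at *
      exact ec_join _ _ hM A B hA hB)
    (by
      intro A hA
      simp only [Finset.mem_filter, Finset.mem_univ, true_and] at hA
      have : A.Nonempty := by
        rw [Finset.nonempty_iff_ne_empty]
        rintro rfl
        have := hA.2.2
        simp at this
        linarith
      obtain ⟨a, ha⟩ := this
      exact ⟨a, ha, WithTop.coe_lt_top a⟩)
  obtain ⟨D, hD, hCD⟩ := ec_extend C hC1
  have hDch : IsChain (· ≤ ·) (D : Set P) := by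
    simp only [ecMC, Finset.mem_filter] at hD
    exact hD.2.1
  refine ⟨D, hD, D.filter (fun i => 0 ≤ c i), Finset.filter_subset _ _, ?_⟩
  set T := D.filter (fun i => 0 ≤ c i) with hT
  set d := ecLin (ecSgn D T) with hd
  -- vertices
  have hvert : ∀ v ∈ enrichedChainVerts P, l v = M → d v = 1 := by
    rintro v ⟨A, hA, hv1, hv0⟩ hvM
    have hlv : ∑ i ∈ A.toFinset, c i * v i = M := by
      rw [← hvM, hl, ecLin_apply]
      refine Finset.sum_subset (Finset.subset_univ _) ?_
      intro i _ hi
      rw [hv0 i (by simpa using hi), mul_zero]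
    have hterm : ∀ i ∈ A.toFinset, c i * v i ≤ |c i| := by
      intro i hi
      rcases hv1 i (by simpa using hi) with h | h
      · rw [h, mul_one]; exact le_abs_self _
      · rw [h, mul_neg, mul_one]; exact neg_le_abs _
    have hsumA := hM A.toFinset (by simpa using hA)
    have heq : ∀ i ∈ A.toFinset, c i * v i = |c i| := by
      rw [← Finset.sum_eq_sum_iff_of_le hterm]
      exact le_antisymm (Finset.sum_le_sum hterm) (by rw [hlv]; exact hsumA)
    have hma : EcMA (fun i => |c i|) M (A.toFinset.filter (fun i => c i ≠ 0)) := by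
      refine ⟨?_, ?_, ?_⟩
      · exact hA.subset (by intro i hi; simp at hi; exact hi.1)
      · intro i hi
        rw [Finset.mem_filter] at hi
        exact abs_pos.2 hi.2
      · rw [← hlv, Finset.sum_filter]
        refine Finset.sum_congr rfl fun i hi => ?_
        rw [heq i hi]
        by_cases h : c i = 0 <;> simp [h]
    obtain ⟨j, hj, hjC⟩ := hC4 _ (Finset.mem_filter.2 ⟨Finset.mem_univ _, hma⟩)
    rw [Finset.mem_filter] at hj
    have hjA : j ∈ A := by simpa using hj.1
    have hjD := hCD hjC
    rw [hd, ecLin_apply, Finset.sum_eq_single j]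
    · have h1 := heq j hj.1
      have h2 := hv1 j hjA
      by_cases h : 0 ≤ c j
      · have hpos : 0 < c j := lt_of_le_of_ne h (Ne.symm hj.2)
        rw [abs_of_nonneg h] at h1
        simp only [ecSgn, hT, hjD, Finset.mem_filter, h, and_self, if_true, one_mul]
        rcases h2 with h2 | h2
        · exact h2
        · rw [h2] at h1; linarith
      · have hneg : c j < 0 := not_le.1 h
        rw [abs_of_neg hneg] at h1
        simp only [ecSgn, hT, hjD, Finset.mem_filter, h, and_false, if_true, if_false]
        rcases h2 with h2 | h2
        · rw [h2] at h1; linarith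
        · rw [h2]; norm_num
    · intro i _ hij
      by_cases hiA : i ∈ A
      · have : i ∉ D := by
          intro hiD
          rcases hDch.total hiD hjD with h | h
          · exact hij (hA.eq hiA hjA h)
          · exact hij (hA.eq hjA hiA h).symm
        simp [ecSgn, this]
      · rw [hv0 i hiA, mul_zero]
    · intro h; exact absurd (Finset.mem_univ _) h
  have hFd : ∀ x ∈ F, d x = 1 := by
    intro x hx
    obtain ⟨hxS, hxM⟩ := (hFe x).1 hx
    have := convexHull_min (s := enrichedChainVerts P) (t := {x | l x < M ∨ (l x = M ∧ d x = 1)})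
      (by
        intro v hv
        rcases (hV v hv).lt_or_eq with h | h
        · exact Or.inl h
        · exact Or.inr ⟨h, hvert v hv h⟩) (ec_convex l d M) hxS
    rcases this with h | h
    · exact absurd hxM h.ne
    · exact h.2
  have hd0 : d ≠ 0 := by
    intro h
    have := hFd x0 hx0
    simp [h] at this
  have key : ∀ (f : (P → ℝ) →ₗ[ℝ] ℝ) (r : ℝ), f ≠ 0 → (∀ x ∈ F, f x = r) →
      vectorSpan ℝ F = LinearMap.ker f := by
    intro f r hf hfr
    apply Submodule.eq_of_le_of_finrank_eq
    · rw [vectorSpan, Submodule.span_le]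
      rintro _ ⟨x, hx, y, hy, rfl⟩
      simp [hfr x hx, hfr y hy]
    · have := Module.Dual.finrank_ker_add_one_of_ne_zero (f := f) hf
      rw [Module.finrank_fintype_fun_eq_card] at this
      rw [hdim]; omega
  have hker : LinearMap.ker l = LinearMap.ker d := by
    rw [← key l M hl0 (fun x hx => ((hFe x).1 hx).2), ← key d 1 hd0 hFd]
  ext x
  constructor
  · intro hx
    exact ⟨((hFe x).1 hx).1, hFd x hx⟩
  · rintro ⟨hxS, hx1⟩
    rw [hFe]
    refine ⟨hxS, ?_⟩
    have : x - x0 ∈ LinearMap.ker d := by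
      rw [LinearMap.mem_ker, map_sub, hFd x0 hx0, hx1, sub_self]
    rw [← hker, LinearMap.mem_ker, map_sub, sub_eq_zero] at this
    exact this

theorem ec_single_mem {P : Type*} [PartialOrder P] [DecidableEq P] (i : P) (r : ℝ)
    (hr : r = 1 ∨ r = -1) : Pi.single i r ∈ enrichedChainVerts P := by
  refine ⟨{i}, by simp, ?_, ?_⟩
  · intro j hj
    rw [Set.mem_singleton_iff] at hj
    subst hj
    simpa using hr
  · intro j hj
    rw [Set.mem_singleton_iff] at hj
    simp [hj]

theorem ec_sgn_univ {P : Type*} [Fintype P] (T : Finset P) (i : P) :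
    ecSgn Finset.univ T i = 1 ∨ ecSgn Finset.univ T i = -1 := by
  by_cases h : i ∈ T <;> simp [ecSgn, h]

theorem ec_sgn_sq {P : Type*} [Fintype P] (T : Finset P) (i : P) :
    ecSgn Finset.univ T i * ecSgn Finset.univ T i = 1 := by
  rcases ec_sgn_univ T i with h | h <;> simp [h]

theorem ecLin_single {P : Type*} [Fintype P] [DecidableEq P] (d : P → ℝ) (i : P) (r : ℝ) :
    ecLin d (Pi.single i r) = d i * r := by
  rw [ecLin_apply, Finset.sum_eq_single i]
  · simp
  · intro j _ hj; simp [hj]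
  · simp

theorem ec_chain_facet {P : Type*} [Fintype P] [PartialOrder P] [Nonempty P]
    (hP : IsChain (· ≤ ·) (Set.univ : Set P)) (T : Finset P) :
    IsFacetOf P (convexHull ℝ (enrichedChainVerts P)) (ecFace Finset.univ T) := by
  classical
  set e : P → ℝ := ecSgn Finset.univ T with he
  have hle : ∀ x ∈ convexHull ℝ (enrichedChainVerts P), ecLin e x ≤ 1 := by
    intro x hx
    have := convexHull_min (s := enrichedChainVerts P) (t := {x | ecLin e x ≤ 1}) (by
      rintro v ⟨A, hA, h1, h0⟩
      rw [Set.mem_ofPred_eq, ecLin_apply]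
      rcases A.eq_empty_or_nonempty with rfl | ⟨j, hj⟩
      · rw [Finset.sum_eq_zero (fun i _ => by rw [h0 i (by simp), mul_zero])]
        norm_num
      · rw [Finset.sum_eq_single j]
        · rcases h1 j hj with h | h <;> rcases ec_sgn_univ T j with h' | h' <;>
            rw [he, h, h'] <;> norm_num
        · intro i _ hij
          rw [h0 i, mul_zero]
          intro hi
          rcases hP.total (Set.mem_univ i) (Set.mem_univ j) with h | h
          · exact hij (hA.eq hi hj h)
          · exact hij (hA.eq hj hi h).symm
        · simp) (convex_halfSpace_le (ecLin e).isLinear 1) hx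
    exact this
  have hmem : ∀ i, Pi.single i (e i) ∈ ecFace (P := P) Finset.univ T := by
    intro i
    refine ⟨subset_convexHull ℝ _ (ec_single_mem i _ (ec_sgn_univ T i)), ?_⟩
    rw [ecLin_single]
    exact ec_sgn_sq T i
  obtain ⟨i0⟩ := ‹Nonempty P›
  refine ⟨⟨_, hmem i0⟩, ?_, ?_, ?_⟩
  · intro _
    refine ⟨LinearMap.toContinuousLinearMap (ecLin e), ?_⟩
    ext x
    simp only [ecFace, Set.mem_ofPred_eq, LinearMap.coe_toContinuousLinearMap']
    constructor
    · rintro ⟨hx, h1⟩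
      refine ⟨hx, fun y hy => ?_⟩
      rw [h1]
      exact hle y hy
    · rintro ⟨hx, h⟩
      refine ⟨hx, le_antisymm (hle x hx) ?_⟩
      have := h _ (hmem i0).1
      rwa [(hmem i0).2] at this
  · intro h
    have h0 : (0 : P → ℝ) ∈ convexHull ℝ (enrichedChainVerts P) :=
      subset_convexHull ℝ _ ⟨∅, by simp, by simp, by simp⟩
    rw [← h] at h0
    have := h0.2
    simp at this
  · have hcard : 0 < Fintype.card P := Fintype.card_pos_iff.2 ⟨i0⟩
    have he0 : ecLin e ≠ 0 := by
      intro h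
      have := (hmem i0).2
      rw [← he, h] at this
      simp at this
    have hk := Module.Dual.finrank_ker_add_one_of_ne_zero (f := ecLin e) he0
    rw [Module.finrank_fintype_fun_eq_card] at hk
    have hub : vectorSpan ℝ (ecFace (P := P) Finset.univ T) ≤ LinearMap.ker (ecLin e) := by
      rw [vectorSpan, Submodule.span_le]
      rintro _ ⟨x, hx, y, hy, rfl⟩
      have h1 : ecLin e x = 1 := hx.2
      have h2 : ecLin e y = 1 := hy.2
      simp [h1, h2]
    have hlb : LinearMap.ker (ecLin e) ≤ vectorSpan ℝ (ecFace (P := P) Finset.univ T) := by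
      intro x hx
      rw [LinearMap.mem_ker, ecLin_apply] at hx
      have : x = ∑ i, (e i * x i) • (Pi.single i (e i) - Pi.single i0 (e i0) : P → ℝ) := by
        simp only [smul_sub]
        rw [Finset.sum_sub_distrib, ← Finset.sum_smul, hx, zero_smul, sub_zero]
        ext j
        rw [Finset.sum_apply, Finset.sum_eq_single j]
        · simp only [Pi.smul_apply, Pi.single_eq_same, smul_eq_mul]
          rw [mul_right_comm, ec_sgn_sq T j, one_mul]
        · intro k _ hk; simp [Pi.single_eq_of_ne hk.symm]
        · simp
      rw [this]
      exact Submodule.sum_mem _ fun i _ => Submodule.smul_mem _ _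
        (vsub_mem_vectorSpan ℝ (hmem i) (hmem i0))
    rw [le_antisymm hub hlb]
    omega

theorem ec_face_inj {P : Type*} [Fintype P] [PartialOrder P] :
    Function.Injective (fun T : Finset P => ecFace (P := P) Finset.univ T) := by
  classical
  intro T T' h
  have h' : ecFace (P := P) Finset.univ T = ecFace Finset.univ T' := h
  ext i
  have hm : Pi.single i (ecSgn Finset.univ T i) ∈ ecFace (P := P) Finset.univ T := by
    refine ⟨subset_convexHull ℝ _ (ec_single_mem i _ (ec_sgn_univ T i)), ?_⟩
    rw [ecLin_single]
    exact ec_sgn_sq T i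
  rw [h'] at hm
  have := hm.2
  rw [ecLin_single] at this
  by_cases h1 : i ∈ T <;> by_cases h2 : i ∈ T' <;> simp [ecSgn, h1, h2] at this ⊢ <;> norm_num at this

/-- The number of facets of `C^(e)_P` is at most `2^n`, with equality if `P` is
a chain. -/
theorem stmt16 (P : Type*) [Fintype P] [PartialOrder P] [Nonempty P] :
    Set.ncard {F : Set (P → ℝ) | IsFacetOf P (convexHull ℝ (enrichedChainVerts P)) F}
      ≤ 2 ^ Fintype.card P ∧
    (IsChain (· ≤ ·) (Set.univ : Set P) →
      Set.ncard {F : Set (P → ℝ) | IsFacetOf P (convexHull ℝ (enrichedChainVerts P)) F}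
        = 2 ^ Fintype.card P) := by
  classical
  set X := {F : Set (P → ℝ) | IsFacetOf P (convexHull ℝ (enrichedChainVerts P)) F} with hX
  set Y : Finset (Set (P → ℝ)) := ((ecMC (Finset.univ : Finset P)).sigma
    (fun C => C.powerset)).image (fun p => ecFace p.1 p.2) with hY
  have hsub : X ⊆ (Y : Set (Set (P → ℝ))) := by
    intro F hF
    obtain ⟨C, hC, T, hT, rfl⟩ := ec_facet F hF
    rw [hY, Finset.mem_coe, Finset.mem_image]
    exact ⟨⟨C, T⟩, by simp [hC, hT], rfl⟩
  have hub : X.ncard ≤ 2 ^ Fintype.card P := by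
    calc X.ncard ≤ (Y : Set (Set (P → ℝ))).ncard := Set.ncard_le_ncard hsub Y.finite_toSet
      _ = Y.card := Set.ncard_coe_finset Y
      _ ≤ _ := Finset.card_image_le
      _ = ∑ C ∈ ecMC (Finset.univ : Finset P), 2 ^ C.card := by
          rw [Finset.card_sigma]; simp
      _ ≤ 2 ^ (Finset.univ : Finset P).card := ec_count _ _ rfl
      _ = _ := by rw [Finset.card_univ]
  refine ⟨hub, fun hP => le_antisymm hub ?_⟩
  calc 2 ^ Fintype.card P = (Set.range (fun T : Finset P => ecFace (P := P) Finset.univ T)).ncard := by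
        rw [← Set.image_univ, Set.ncard_image_of_injective _ ec_face_inj, Set.ncard_univ,
          Nat.card_eq_fintype_card, Fintype.card_finset]
    _ ≤ X.ncard := by
        refine Set.ncard_le_ncard ?_ (Y.finite_toSet.subset hsub)
        rintro _ ⟨T, rfl⟩
        exact ec_chain_facet hP T
end
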